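/- arXiv:1607.02381 — 3 statements merged into one kernel-verified Lean document; each statement's English description precedes it below -/
import Mathlib

section
/- Let V^n ∈ {0,1}^n be an arbitrary random vector and let W^n = V^n ⊕ Z^n (coordinatewise mod-2 sum), where Z^n has i.i.d. Bernoulli(α) components independent of V^n, α ∈ [0,1/2]. Then M(W^n) ≥ n·α(1 − α) + (1 − 2α)^2 · M(V^n), with equality when the components V_1,…,V_n are mutually independent. -/
/-!
Fix a coordinate `k`, let `Q(V)` and `R(W)` be the conditional probabilities of `V_k = 1` and
`W_k = 1` given the respective pasts, and put `q(V) = α + (1 - 2α) Q(V)`. With `h(t) = t (1 - t)`,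

* `h(q) = α (1 - α) + (1 - 2α)² h(Q)`, and
* `h(R) = h(q) + (1 - 2R) (R - q) + (R - q)²`.

The middle term has zero mean: writing
`R - q = (R - W_k) + (W_k - α - (1 - 2α) V_k) + (1 - 2α) (V_k - Q)`,
each summand is orthogonal to every function of `W^{k-1}`: the first by the definition of `R`
(`sum_condQ_orth`), the second because the noise is memoryless (`sum_prod_orth`), the third because
averaging a function of `W^{k-1}` over the noise leaves a function of `V^{k-1}` (`chan_avg_past`).
Taking expectations gives the identity `smseTerm_out`:
`E[h(R)] = α (1 - α) + (1 - 2α)² E[h(Q)] + E[(R(W) - q(V))²]`.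
The inequality follows by dropping the square. If the `V_i` are independent Bernoulli(`p i`), the
`W_i` are independent Bernoulli(`α + (1 - 2α) p i`), so almost surely `Q = p k` and
`R = α + (1 - 2α) p k = q`, and the square vanishes.
-/

open Finset MeasureTheory

noncomputable section

/-- Conditional probability that coordinate `k` equals `true` given the coordinates
before `k`, under the (possibly unnormalized) pmf `μ` on `{0,1}^n`. -/
def condQ {n : ℕ} (μ : (Fin n → Bool) → ℝ) (k : Fin n) (x : Fin n → Bool) : ℝ :=
  (∑ y ∈ Finset.univ.filter
      (fun y : Fin n → Bool => (∀ i : Fin n, i < k → y i = x i) ∧ y k = true), μ y) /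
  (∑ y ∈ Finset.univ.filter
      (fun y : Fin n → Bool => ∀ i : Fin n, i < k → y i = x i), μ y)

/-- The `k`-th term `E[Q_k (1 - Q_k)]` of the sequential mean squared error. -/
def smseTerm {n : ℕ} (μ : (Fin n → Bool) → ℝ) (k : Fin n) : ℝ :=
  ∑ x : Fin n → Bool, μ x * (condQ μ k x * (1 - condQ μ k x))

/-- The sequential mean squared error `M(U^n) = Σ_k E[Q_k (1 - Q_k)]`. -/
def smse {n : ℕ} (μ : (Fin n → Bool) → ℝ) : ℝ := ∑ k : Fin n, smseTerm μ k

/-- The uniform pmf on `{0,1}^n`. -/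
def unif (n : ℕ) : (Fin n → Bool) → ℝ := fun _ => ((2 : ℝ) ^ n)⁻¹

/-- The SMSE of `μ` given the side information `b` :
`M(X^n | b(X^n)) = Σ_c Σ_k E[Q_k (1-Q_k)]` where `Q_k = P[X_k = 1 | X^{k-1}, b(X^n)]`. -/
def condSMSE {n : ℕ} (μ : (Fin n → Bool) → ℝ) (b : (Fin n → Bool) → Bool) : ℝ :=
  ∑ c : Bool, smse (fun x => if b x = c then μ x else 0)

/-- Hamming weight. -/
def hw {n : ℕ} (x : Fin n → Bool) : ℕ := (Finset.univ.filter (fun i => x i = true)).card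

/-- The majority function: `1` iff the Hamming weight exceeds `n/2`. -/
def majF (n : ℕ) : (Fin n → Bool) → Bool := fun x => decide (n < 2 * hw x)

/-- The joint pmf `y ↦ P[Y^n = y, b(X^n) = c]` where `X^n` is uniform and
`Y^n = X^n ⊕ Z^n` with `Z^n` i.i.d. Bernoulli(α). -/
def noisyPMF (n : ℕ) (α : ℝ) (b : (Fin n → Bool) → Bool) (c : Bool) :
    (Fin n → Bool) → ℝ :=
  fun y => ∑ x : Fin n → Bool,
    if b x = c then ((2 : ℝ) ^ n)⁻¹ * ∏ i : Fin n, (if y i = x i then 1 - α else α) else 0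

/-- The noisy SMSE `M(Y^n | b(X^n))`. -/
def noisySMSE (n : ℕ) (α : ℝ) (b : (Fin n → Bool) → Bool) : ℝ :=
  ∑ c : Bool, smse (noisyPMF n α b c)

/-- The binary entropy function (base 2). -/
def binEnt (p : ℝ) : ℝ := -(p * Real.logb 2 p) - (1 - p) * Real.logb 2 (1 - p)

/-- `μ(α) = h(arccos(1-2α)/π)`. -/
def muF (α : ℝ) : ℝ := binEnt (Real.arccos (1 - 2 * α) / Real.pi)

/-- Base-2 Shannon entropy of a pmf on a finite type. -/
def entropy {β : Type*} [Fintype β] (p : β → ℝ) : ℝ := ∑ x : β, -(p x * Real.logb 2 (p x))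

open scoped Classical in
/-- Pushforward pmf along `f`. -/
def push {β γ : Type*} [Fintype β] (μ : β → ℝ) (f : β → γ) : γ → ℝ :=
  fun c => ∑ x ∈ Finset.univ.filter (fun x => f x = c), μ x

/-- The pmf of a majority random vector: uniform on `{v : w(v) > n/2}`. -/
def majPMF (n : ℕ) : (Fin n → Bool) → ℝ :=
  fun v => if n < 2 * hw v then
    (((Finset.univ.filter (fun u : Fin n → Bool => n < 2 * hw u)).card : ℝ))⁻¹ else 0

/-- Standard Gaussian density. -/
def stdPdf (t : ℝ) : ℝ := Real.exp (-(t ^ 2) / 2) / Real.sqrt (2 * Real.pi)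

/-- Gaussian tail function `Q(u) = P[G > u]`. -/
def gaussQ (u : ℝ) : ℝ := ∫ s in Set.Ioi u, stdPdf s

/-- Base-2 conditional Shannon entropy `H(C | Y)` for the joint pmf `J`. -/
def condEntBool {β : Type*} [Fintype β] (J : β → Bool → ℝ) : ℝ :=
  ∑ y : β, ∑ c : Bool, -(J y c * Real.logb 2 (J y c / (∑ c' : Bool, J y c')))

end

/-- The 0/1 value of a bit. -/
def bit (b : Bool) : ℝ := if b then 1 else 0

/-- `g` depends only on the coordinates strictly before `k`. -/
def Past {n : ℕ} (k : Fin n) (g : (Fin n → Bool) → ℝ) : Prop :=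
  ∀ x y, (∀ i, i < k → x i = y i) → g x = g y

/-- Transition probability from `v` to `w` of the memoryless binary symmetric channel. -/
def chan {n : ℕ} (α : ℝ) (v w : Fin n → Bool) : ℝ :=
  ∏ i : Fin n, (if w i = v i then 1 - α else α)

/-- The law of the channel output when the input has law `μ`. -/
def outPMF {n : ℕ} (α : ℝ) (μ : (Fin n → Bool) → ℝ) (w : Fin n → Bool) : ℝ :=
  ∑ v, μ v * chan α v w

/-- The product of the Bernoulli(`p i`) laws; the `p i` are not required to lie in `[0,1]`. -/
def prodPMF {n : ℕ} (p : Fin n → ℝ) (v : Fin n → Bool) : ℝ :=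
  ∏ i : Fin n, (if v i then p i else 1 - p i)

/-- Mass of the vectors that agree with `x` before `k`, i.e. the denominator of `condQ`. -/
def pastMass {n : ℕ} (μ : (Fin n → Bool) → ℝ) (k : Fin n) (x : Fin n → Bool) : ℝ :=
  ∑ y : Fin n → Bool, if ∀ i : Fin n, i < k → y i = x i then μ y else 0

lemma condQ_eq {n : ℕ} (μ : (Fin n → Bool) → ℝ) (k : Fin n) (x : Fin n → Bool) :
    condQ μ k x = (∑ y : Fin n → Bool,
      if ∀ i : Fin n, i < k → y i = x i then bit (y k) * μ y else 0) / pastMass μ k x := by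
  unfold condQ pastMass
  rw [Finset.sum_filter, Finset.sum_filter]
  congr 1
  refine Finset.sum_congr rfl fun y _ => ?_
  by_cases h : ∀ i : Fin n, i < k → y i = x i
  · cases hy : y k <;> simp [bit]
  · simp only [h, false_and, if_false]

lemma agree_congr {n : ℕ} {k : Fin n} {x x' : Fin n → Bool} (h : ∀ i, i < k → x i = x' i)
    (y : Fin n → Bool) : (∀ i, i < k → y i = x i) ↔ (∀ i, i < k → y i = x' i) :=
  forall₂_congr fun i hi => by rw [h i hi]

lemma past_pastMass {n : ℕ} (μ : (Fin n → Bool) → ℝ) (k : Fin n) : Past k (pastMass μ k) := by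
  intro x x' h
  unfold pastMass
  simp only [agree_congr h]

lemma past_condQ {n : ℕ} (μ : (Fin n → Bool) → ℝ) (k : Fin n) : Past k (condQ μ k) := by
  intro x x' h
  rw [condQ_eq, condQ_eq, past_pastMass μ k x x' h]
  simp only [agree_congr h]

lemma eq_zero_of_pastMass {n : ℕ} {μ : (Fin n → Bool) → ℝ} (hμ : ∀ v, 0 ≤ μ v) {k : Fin n}
    {x : Fin n → Bool} (h : pastMass μ k x = 0) : μ x = 0 := by
  have h0 := (Finset.sum_eq_zero_iff_of_nonneg (fun y _ => by
    split_ifs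
    · exact hμ y
    · exact le_rfl)).1 h x (Finset.mem_univ x)
  simpa using h0

/-- `condQ` is the conditional expectation of the `k`-th bit given its past. -/
lemma sum_condQ_orth {n : ℕ} {μ : (Fin n → Bool) → ℝ} (hμ : ∀ v, 0 ≤ μ v) {k : Fin n}
    {g : (Fin n → Bool) → ℝ} (hg : Past k g) :
    ∑ x, μ x * g x * (bit (x k) - condQ μ k x) = 0 := by
  have key : ∑ x, μ x * g x * condQ μ k x = ∑ y, μ y * g y * bit (y k) := by
    calc ∑ x, μ x * g x * condQ μ k x
        = ∑ x, ∑ y : Fin n → Bool, (if ∀ i : Fin n, i < k → y i = x i then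
            μ x * g x * (bit (y k) * μ y / pastMass μ k x) else 0) := by
          refine Finset.sum_congr rfl fun x _ => ?_
          rw [condQ_eq, Finset.sum_div, Finset.mul_sum]
          refine Finset.sum_congr rfl fun y _ => ?_
          split_ifs <;> simp
      _ = ∑ y : Fin n → Bool, ∑ x : Fin n → Bool,
            (bit (y k) * μ y * g y / pastMass μ k y) *
              (if ∀ i : Fin n, i < k → x i = y i then μ x else 0) := by
          rw [Finset.sum_comm]
          refine Finset.sum_congr rfl fun y _ => Finset.sum_congr rfl fun x _ => ?_
          by_cases h : ∀ i : Fin n, i < k → y i = x i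
          · have h' : ∀ i : Fin n, i < k → x i = y i := fun i hi => (h i hi).symm
            rw [if_pos h, if_pos h', hg x y h', past_pastMass μ k x y h']
            ring
          · have h' : ¬ ∀ i : Fin n, i < k → x i = y i :=
              fun h' => h fun i hi => (h' i hi).symm
            rw [if_neg h, if_neg h', mul_zero]
      _ = ∑ y, μ y * g y * bit (y k) := by
          refine Finset.sum_congr rfl fun y _ => ?_
          rw [← Finset.mul_sum]
          change _ * pastMass μ k y = _
          by_cases h : pastMass μ k y = 0
          · rw [h, eq_zero_of_pastMass hμ h]
            simp
          · field_simp
  simp only [mul_sub, Finset.sum_sub_distrib, key, sub_self]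

lemma sum_prodPMF {n : ℕ} (p : Fin n → ℝ) : ∑ v, prodPMF p v = 1 := by
  have h := Finset.prod_univ_sum (fun _ : Fin n => (Finset.univ : Finset Bool))
    (fun i b => if b then p i else 1 - p i)
  rw [Fintype.piFinset_univ] at h
  unfold prodPMF
  rw [← h]
  simp

/-- Under a product law, the `k`-th bit is independent of its past. -/
lemma sum_prod_orth {n : ℕ} (p : Fin n → ℝ) {k : Fin n} {g : (Fin n → Bool) → ℝ}
    (hg : Past k g) : ∑ y, prodPMF p y * g y * (bit (y k) - p k) = 0 := by
  -- The terms cancel in pairs under flipping the `k`-th bit.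
  refine Finset.sum_involution (fun y _ => Function.update y k (!y k)) ?_ ?_ ?_ ?_
  · intro y _
    have hg' : g (Function.update y k (!y k)) = g y :=
      hg _ _ fun i hi => Function.update_of_ne hi.ne _ _
    have hp : ∏ i ∈ Finset.univ.erase k,
        (if Function.update y k (!y k) i then p i else 1 - p i)
        = ∏ i ∈ Finset.univ.erase k, (if y i then p i else 1 - p i) :=
      Finset.prod_congr rfl fun i hi => by
        rw [Function.update_of_ne (Finset.ne_of_mem_erase hi)]
    unfold prodPMF
    rw [hg', ← Finset.mul_prod_erase _ _ (Finset.mem_univ k),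
      ← Finset.mul_prod_erase _ _ (Finset.mem_univ k), hp, Function.update_self]
    cases y k <;> simp [bit] <;> ring
  · intro y _ _ h
    have := congrFun h k
    simp at this
  · intro y _
    exact Finset.mem_univ _
  · intro y _
    simp

lemma chan_eq_prodPMF {n : ℕ} (α : ℝ) (v w : Fin n → Bool) :
    chan α v w = prodPMF (fun i => α + (1 - 2 * α) * bit (v i)) w := by
  refine Finset.prod_congr rfl fun i _ => ?_
  cases hw : w i <;> cases hv : v i <;> simp [bit, hv] <;> ring

lemma chan_nonneg {n : ℕ} {α : ℝ} (hα0 : 0 ≤ α) (hα1 : α ≤ 1 / 2) (v w : Fin n → Bool) :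
    0 ≤ chan α v w :=
  Finset.prod_nonneg fun i _ => by split_ifs <;> linarith

lemma sum_chan {n : ℕ} (α : ℝ) (v : Fin n → Bool) : ∑ w, chan α v w = 1 := by
  simp only [chan_eq_prodPMF, sum_prodPMF]

/-- Averaging a function of the past of the output over the noise yields a function of the past
of the input. -/
lemma chan_avg_past {n : ℕ} (α : ℝ) {k : Fin n} {g : (Fin n → Bool) → ℝ} (hg : Past k g) :
    Past k (fun v => ∑ w, chan α v w * g w) := by
  intro v v' h
  -- Translating the output by `v ⊕ v'` preserves its past and turns the input `v` into `v'`.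
  let e : (Fin n → Bool) → (Fin n → Bool) := fun w i => xor (w i) (xor (v i) (v' i))
  have he : Function.Involutive e := fun w => funext fun i => by simp [e]
  refine Fintype.sum_equiv he.toPerm _ _ fun w => ?_
  have h1 : g (e w) = g w := hg _ _ fun i hi => by simp [e, h i hi]
  have h2 : chan α v' (e w) = chan α v w := Finset.prod_congr rfl fun i _ => by
    have : (e w i = v' i) ↔ (w i = v i) := by
      simp only [e]
      cases w i <;> cases v i <;> cases v' i <;> simp
    simp only [this]
  change _ = chan α v' (e w) * g (e w)
  rw [h1, h2]

lemma outPMF_nonneg {n : ℕ} {α : ℝ} (hα0 : 0 ≤ α) (hα1 : α ≤ 1 / 2)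
    {μ : (Fin n → Bool) → ℝ} (hμ : ∀ v, 0 ≤ μ v) (w : Fin n → Bool) : 0 ≤ outPMF α μ w :=
  Finset.sum_nonneg fun v _ => mul_nonneg (hμ v) (chan_nonneg hα0 hα1 v w)

/-- The error `R(W) - q(V)` is orthogonal to every function of the past of the output. -/
lemma sum_cross {n : ℕ} {α : ℝ} (hα0 : 0 ≤ α) (hα1 : α ≤ 1 / 2)
    {μ : (Fin n → Bool) → ℝ} (hμ : ∀ v, 0 ≤ μ v) {k : Fin n}
    {g : (Fin n → Bool) → ℝ} (hg : Past k g) :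
    ∑ v, ∑ w, μ v * chan α v w *
      (g w * (condQ (outPMF α μ) k w - (α + (1 - 2 * α) * condQ μ k v))) = 0 := by
  have h1 : ∑ v, ∑ w, μ v * chan α v w * (g w * (bit (w k) - condQ (outPMF α μ) k w)) = 0 := by
    rw [Finset.sum_comm, ← sum_condQ_orth (outPMF_nonneg hα0 hα1 hμ) hg]
    refine Finset.sum_congr rfl fun w _ => ?_
    rw [← Finset.sum_mul, mul_assoc]
    rfl
  have h2 : ∑ v, ∑ w, μ v * chan α v w *
      (g w * (bit (w k) - (α + (1 - 2 * α) * bit (v k)))) = 0 := by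
    refine Finset.sum_eq_zero fun v _ => ?_
    have h := sum_prod_orth (fun i => α + (1 - 2 * α) * bit (v i)) hg
    simp only [← chan_eq_prodPMF] at h
    rw [← mul_zero (μ v), ← h, Finset.mul_sum]
    exact Finset.sum_congr rfl fun w _ => by ring
  have h3 : ∑ v, ∑ w, μ v * chan α v w * (g w * (bit (v k) - condQ μ k v)) = 0 := by
    rw [← sum_condQ_orth hμ (chan_avg_past α hg)]
    refine Finset.sum_congr rfl fun v _ => ?_
    rw [Finset.mul_sum, Finset.sum_mul]
    exact Finset.sum_congr rfl fun w _ => by ring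
  calc _ = -(∑ v, ∑ w, μ v * chan α v w * (g w * (bit (w k) - condQ (outPMF α μ) k w)))
        + (∑ v, ∑ w, μ v * chan α v w * (g w * (bit (w k) - (α + (1 - 2 * α) * bit (v k)))))
        + (1 - 2 * α) * ∑ v, ∑ w, μ v * chan α v w * (g w * (bit (v k) - condQ μ k v)) := by
        simp only [Finset.mul_sum, ← Finset.sum_neg_distrib, ← Finset.sum_add_distrib]
        exact Finset.sum_congr rfl fun v _ => Finset.sum_congr rfl fun w _ => by ring
    _ = 0 := by rw [h1, h2, h3]; ring

/-- The exact gap in the inequality, coordinate by coordinate. -/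
lemma smseTerm_out {n : ℕ} {α : ℝ} (hα0 : 0 ≤ α) (hα1 : α ≤ 1 / 2)
    {μ : (Fin n → Bool) → ℝ} (hμ : ∀ v, 0 ≤ μ v) (hμ1 : ∑ v, μ v = 1) (k : Fin n) :
    smseTerm (outPMF α μ) k = α * (1 - α) + (1 - 2 * α) ^ 2 * smseTerm μ k
      + ∑ v, ∑ w, μ v * chan α v w *
        (condQ (outPMF α μ) k w - (α + (1 - 2 * α) * condQ μ k v)) ^ 2 := by
  have hg : Past k (fun w => 1 - 2 * condQ (outPMF α μ) k w) := fun x y h => by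
    simp only [past_condQ _ k x y h]
  have hc := sum_cross hα0 hα1 hμ hg
  have hq : ∑ v, ∑ w, μ v * chan α v w *
      (α * (1 - α) + (1 - 2 * α) ^ 2 * (condQ μ k v * (1 - condQ μ k v)))
      = α * (1 - α) + (1 - 2 * α) ^ 2 * smseTerm μ k := by
    calc _ = ∑ v, (α * (1 - α) * μ v
          + (1 - 2 * α) ^ 2 * (μ v * (condQ μ k v * (1 - condQ μ k v)))) := by
          refine Finset.sum_congr rfl fun v _ => ?_
          rw [← Finset.sum_mul, ← Finset.mul_sum, sum_chan]
          ring
      _ = _ := by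
          rw [Finset.sum_add_distrib, ← Finset.mul_sum, ← Finset.mul_sum, hμ1, mul_one]
          rfl
  have hl : smseTerm (outPMF α μ) k = ∑ v, ∑ w, μ v * chan α v w *
      (condQ (outPMF α μ) k w * (1 - condQ (outPMF α μ) k w)) := by
    rw [Finset.sum_comm]
    refine Finset.sum_congr rfl fun w _ => ?_
    rw [← Finset.sum_mul]
    rfl
  rw [← hq, ← add_zero (∑ v, ∑ w, μ v * chan α v w * (α * (1 - α) + _)), ← hc, hl]
  simp only [← Finset.sum_add_distrib]
  exact Finset.sum_congr rfl fun v _ => Finset.sum_congr rfl fun w _ => by ring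

lemma condQ_prodPMF {n : ℕ} {p : Fin n → ℝ} (hp : ∀ v, 0 ≤ prodPMF p v) (k : Fin n)
    {x : Fin n → Bool} (hx : prodPMF p x ≠ 0) : condQ (prodPMF p) k x = p k := by
  have hD : pastMass (prodPMF p) k x ≠ 0 := fun h => hx (eq_zero_of_pastMass hp h)
  have hg : Past k (fun y => if ∀ i : Fin n, i < k → y i = x i then (1 : ℝ) else 0) := by
    intro y y' h
    have : (∀ i, i < k → y i = x i) ↔ (∀ i, i < k → y' i = x i) :=
      forall₂_congr fun i hi => by rw [h i hi]
    simp only [this]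
  rw [condQ_eq, div_eq_iff hD, ← sub_eq_zero]
  refine Eq.trans ?_ (sum_prod_orth p hg)
  unfold pastMass
  rw [Finset.mul_sum, ← Finset.sum_sub_distrib]
  refine Finset.sum_congr rfl fun y _ => ?_
  split_ifs <;> ring

/-- Passing a product law through the channel gives a product law. -/
lemma outPMF_prodPMF {n : ℕ} (α : ℝ) (p : Fin n → ℝ) :
    outPMF α (prodPMF p) = prodPMF (fun i => α + (1 - 2 * α) * p i) := by
  funext w
  have h := Finset.prod_univ_sum (fun _ : Fin n => (Finset.univ : Finset Bool))
    (fun i b => (if b then p i else 1 - p i) * (if w i = b then 1 - α else α))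
  rw [Fintype.piFinset_univ] at h
  unfold outPMF prodPMF chan
  simp only [← Finset.prod_mul_distrib]
  rw [← h]
  refine Finset.prod_congr rfl fun i _ => ?_
  cases w i <;> simp <;> ring

theorem stmt14 (n : ℕ) (α : ℝ) (hα0 : 0 ≤ α) (hα1 : α ≤ 1/2)
    (μ : (Fin n → Bool) → ℝ) (hμ0 : ∀ v, 0 ≤ μ v) (hμ1 : ∑ v : Fin n → Bool, μ v = 1) :
    smse (fun w : Fin n → Bool => ∑ v : Fin n → Bool,
        μ v * ∏ i : Fin n, (if w i = v i then 1 - α else α))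
      ≥ (n : ℝ) * (α * (1 - α)) + (1 - 2*α)^2 * smse μ ∧
    ((∃ p : Fin n → ℝ, ∀ v : Fin n → Bool,
        μ v = ∏ i : Fin n, (if v i then p i else 1 - p i)) →
      smse (fun w : Fin n → Bool => ∑ v : Fin n → Bool,
          μ v * ∏ i : Fin n, (if w i = v i then 1 - α else α))
        = (n : ℝ) * (α * (1 - α)) + (1 - 2*α)^2 * smse μ) := by
  change smse (outPMF α μ) ≥ _ ∧ (_ → smse (outPMF α μ) = _)
  have hsum : smse (outPMF α μ) = (n : ℝ) * (α * (1 - α)) + (1 - 2 * α) ^ 2 * smse μ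
      + ∑ k, ∑ v, ∑ w, μ v * chan α v w *
        (condQ (outPMF α μ) k w - (α + (1 - 2 * α) * condQ μ k v)) ^ 2 := by
    unfold smse
    simp only [smseTerm_out hα0 hα1 hμ0 hμ1, Finset.sum_add_distrib, ← Finset.mul_sum,
      Finset.sum_const, Finset.card_univ, Fintype.card_fin, nsmul_eq_mul]
    ring
  refine ⟨?_, ?_⟩
  · rw [hsum, ge_iff_le, le_add_iff_nonneg_right]
    exact Finset.sum_nonneg fun k _ => Finset.sum_nonneg fun v _ => Finset.sum_nonneg fun w _ =>
      mul_nonneg (mul_nonneg (hμ0 v) (chan_nonneg hα0 hα1 v w)) (sq_nonneg _)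
  · rintro ⟨p, hp⟩
    rw [hsum, add_eq_left]
    obtain rfl : μ = prodPMF p := funext hp
    refine Finset.sum_eq_zero fun k _ => Finset.sum_eq_zero fun v _ =>
      Finset.sum_eq_zero fun w _ => ?_
    by_cases h : prodPMF p v * chan α v w = 0
    · rw [h, zero_mul]
    have hv : prodPMF p v ≠ 0 := left_ne_zero_of_mul h
    have hw : outPMF α (prodPMF p) w ≠ 0 := fun h0 =>
      h ((Finset.sum_eq_zero_iff_of_nonneg fun v _ =>
        mul_nonneg (hμ0 v) (chan_nonneg hα0 hα1 v w)).1 h0 v (Finset.mem_univ v))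
    have hout := outPMF_nonneg hα0 hα1 hμ0
    rw [outPMF_prodPMF] at hw hout ⊢
    rw [condQ_prodPMF hμ0 k hv, condQ_prodPMF hout k hw]
    ring
end

section
/- For every fixed α ∈ [0,1/2], the conditional entropy of the channel output given that the input has majority one satisfies H(Y^n | maj(X^n) = 1) ≤ n − 1 + μ(α) + o(1), i.e., limsup over odd n → ∞ of [H(Y^n | maj(X^n) = 1) − (n − 1 + μ(α))] ≤ 0. -/
/-!
Write `n = 2m+1`. The conditional law of `Y^n` given `maj(X^n) = 1` is compared, through Gibbs'
inequality, with the law putting mass `1 - t` uniformly on the words of majority one and mass `t`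
uniformly on the others. As both classes have `2^(n-1)` elements, this gives
`H(Y^n | maj(X^n) = 1) ≤ n - 1 + h(t)` for every `t ∈ (0, 1/2]` that is at least the flip
probability `D_m(α) = P[maj Y = 0 | maj X = 1]` (`entropy_le`). By continuity of `h` it remains to
show `limsup D_m(α) ≤ Θ(α) := arccos(1 - 2α) / π` (`flipProb_eventually`).

For this no central limit theorem is needed. A Russo-type formula (`hasDerivAt_stabT`) gives
`D_m'(a) = (2m+1) 4^(-m) ∑ P[Y' = y | X' = x]`, the sum being over balanced words `x`, `y` of
length `2m`. Fourier inversion (`sum_balInd_bscW`) evaluates the sum over `y` as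
`(1/π) ∫ (1 - c² sin² s)^m ds` over `[-π/2, π/2]`, with `c² = 4a(1-a)`. Inserting a factor
`cos s` and substituting `u = c sin s` bounds this below by `1/(πc)` times the integral of
`(1 - u²)^m` over `[-c, c]`, which up to tails at most `(1 - c²)^m` is the integral over `[-1, 1]`,
namely `2·4^m / ((2m+1) C(2m,m))`. Hence
`D_m'(a) ≥ (1 - (2m+1)(1-c²)^m) · 2/(πc)`, and `2/(πc) = Θ'(a)`. Integrating from `α > 0` to
`1/2`, where `D_m = Θ = 1/2`, yields the claim, since `(2m+1)(1-2α)^(2m) → 0`; for `α = 0` both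
sides vanish.
-/

open Finset MeasureTheory

noncomputable section

/-! ### The channel and the derivative of the stability of majority -/

/-- Transition probability `P[Y^n = y | X^n = x]` of the memoryless binary symmetric channel. -/
def bscW {n : ℕ} (α : ℝ) (x y : Fin n → Bool) : ℝ :=
  ∏ i : Fin n, (if y i = x i then 1 - α else α)

/-- Real-valued indicator of the event that the majority is one. -/
def majInd (n : ℕ) (x : Fin n → Bool) : ℝ := if n < 2 * hw x then 1 else 0

/-- Real-valued indicator of the balanced words of `{0,1}^(2m)`. -/
def balInd (m : ℕ) (x : Fin (2 * m) → Bool) : ℝ := if hw x = m then 1 else 0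

/-- `T(α) = 2^n P[maj X = 1, maj Y = 1]`. -/
def stabT (n : ℕ) (α : ℝ) : ℝ :=
  ∑ x : Fin n → Bool, ∑ y : Fin n → Bool, majInd n x * majInd n y * bscW α x y

lemma sum_bscW {n : ℕ} (α : ℝ) (x : Fin n → Bool) : ∑ y, bscW α x y = 1 := by
  unfold bscW
  have := Finset.prod_univ_sum (fun _ : Fin n => (Finset.univ : Finset Bool))
    (fun i b => if b = x i then 1 - α else α)
  rw [Fintype.piFinset_univ] at this
  rw [← this]
  apply Finset.prod_eq_one
  intro i _
  cases x i <;> simp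

lemma bscW_nonneg {n : ℕ} {α : ℝ} (h0 : 0 ≤ α) (h1 : α ≤ 1) (x y : Fin n → Bool) :
    0 ≤ bscW α x y := by
  unfold bscW
  apply Finset.prod_nonneg
  intro i _
  split_ifs <;> linarith

lemma hw_eq_sum {n : ℕ} (x : Fin n → Bool) : hw x = ∑ i, if x i = true then 1 else 0 := by
  rw [hw, Finset.card_filter]

lemma hw_compl {n : ℕ} (x : Fin n → Bool) : hw (fun i => !x i) + hw x = n := by
  rw [hw_eq_sum, hw_eq_sum, ← Finset.sum_add_distrib]
  have : ∀ i, ((if (!x i) = true then 1 else 0) + if x i = true then 1 else 0) = 1 := by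
    intro i; cases x i <;> simp
  rw [Finset.sum_congr rfl (fun i _ => this i)]
  simp

/-- For odd length, complementation swaps the two majority classes, so they are equinumerous. -/
lemma sum_majInd (m : ℕ) : ∑ x, majInd (2 * m + 1) x = 4 ^ m := by
  have h1 : ∑ x : Fin (2 * m + 1) → Bool, majInd (2 * m + 1) (fun i => !x i) = ∑ x, majInd (2 * m + 1) x :=
    Equiv.sum_comp (Function.Involutive.toPerm (fun (x : Fin (2 * m + 1) → Bool) i => !x i)
      (fun x => by ext i; simp)) (majInd (2 * m + 1))
  have h2 : ∑ x : Fin (2 * m + 1) → Bool, (majInd (2 * m + 1) (fun i => !x i) + majInd (2 * m + 1) x)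
      = ∑ _x : Fin (2 * m + 1) → Bool, (1 : ℝ) := by
    apply Finset.sum_congr rfl
    intro x _
    have := hw_compl x
    unfold majInd
    split_ifs <;> first | omega | norm_num
  rw [Finset.sum_add_distrib, h1] at h2
  simp [pow_succ, pow_mul] at h2
  linarith

lemma hw_insertNth {n : ℕ} (i : Fin (n + 1)) (b : Bool) (x : Fin n → Bool) :
    hw (i.insertNth b x : Fin (n + 1) → Bool) = (if b = true then 1 else 0) + hw x := by
  simp [hw_eq_sum, Fin.sum_univ_succAbove _ i]

lemma sum_insertNth {n : ℕ} (i : Fin (n + 1)) (F : (Fin (n + 1) → Bool) → ℝ) :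
    ∑ x, F x = ∑ x' : Fin n → Bool, (F (i.insertNth true x') + F (i.insertNth false x')) := by
  rw [← Equiv.sum_comp (Fin.insertNthEquiv (fun _ => Bool) i) F, Fintype.sum_prod_type_right]
  simp [Fin.insertNthEquiv]

/-- The coordinate `i` is pivotal for the majority iff the remaining word is balanced. -/
lemma majInd_diff (m : ℕ) (i : Fin (2 * m + 1)) (x : Fin (2 * m) → Bool) :
    majInd (2 * m + 1) (i.insertNth true x) - majInd (2 * m + 1) (i.insertNth false x)
      = balInd m x := by
  unfold majInd balInd
  rw [hw_insertNth, hw_insertNth]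
  simp only [if_true]
  norm_num
  split_ifs <;> first | omega | norm_num

lemma hasDerivAt_bscW {n : ℕ} (α : ℝ) (x y : Fin (n + 1) → Bool) :
    HasDerivAt (fun a => bscW a x y)
      (∑ i, (∏ j : Fin n, if y (i.succAbove j) = x (i.succAbove j) then 1 - α else α) *
        (if y i = x i then -1 else 1)) α := by
  have h := HasDerivAt.fun_finsetProd (u := (Finset.univ : Finset (Fin (n + 1))))
    (f := fun i a => if y i = x i then 1 - a else a)
    (f' := fun i => if y i = x i then (-1 : ℝ) else 1) (x := α) (by
      intro i _
      split_ifs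
      · simpa using (hasDerivAt_id α).const_sub 1
      · exact hasDerivAt_id α)
  unfold bscW
  refine h.congr_deriv ?_
  apply Finset.sum_congr rfl
  intro i _
  rw [smul_eq_mul]
  congr 1
  rw [Fin.univ_succAbove _ i, Finset.erase_cons, Finset.prod_map]
  rfl

/-- Russo-type formula: only pivotal coordinates contribute to the derivative, and a coordinate
is pivotal for the majority exactly when the other `2m` coordinates are balanced. -/
lemma hasDerivAt_stabT (m : ℕ) (α : ℝ) :
    HasDerivAt (stabT (2 * m + 1))
      (-((2 * m + 1 : ℝ) * ∑ x : Fin (2 * m) → Bool, ∑ y : Fin (2 * m) → Bool,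
        balInd m x * balInd m y * bscW α x y)) α := by
  have h : HasDerivAt (stabT (2 * m + 1))
      (∑ x : Fin (2 * m + 1) → Bool, ∑ y : Fin (2 * m + 1) → Bool,
        majInd (2 * m + 1) x * majInd (2 * m + 1) y *
        (∑ i, (∏ j : Fin (2 * m),
          if y (i.succAbove j) = x (i.succAbove j) then 1 - α else α) *
        (if y i = x i then -1 else 1))) α := by
    unfold stabT
    apply HasDerivAt.fun_sum
    intro x _
    apply HasDerivAt.fun_sum
    intro y _
    exact (hasDerivAt_bscW α x y).const_mul _
  refine h.congr_deriv ?_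
  have key : ∀ i : Fin (2 * m + 1), ∑ x : Fin (2 * m + 1) → Bool, ∑ y : Fin (2 * m + 1) → Bool,
        majInd (2 * m + 1) x * majInd (2 * m + 1) y *
        ((∏ j : Fin (2 * m), if y (i.succAbove j) = x (i.succAbove j) then 1 - α else α) *
        (if y i = x i then -1 else 1)) = -∑ x : Fin (2 * m) → Bool, ∑ y : Fin (2 * m) → Bool,
        balInd m x * balInd m y * bscW α x y := by
    intro i
    rw [sum_insertNth i, ← Finset.sum_neg_distrib]
    apply Finset.sum_congr rfl
    intro x _
    rw [sum_insertNth i, sum_insertNth i, ← Finset.sum_add_distrib, ← Finset.sum_neg_distrib]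
    apply Finset.sum_congr rfl
    intro y _
    simp only [Fin.insertNth_apply_same, Fin.insertNth_apply_succAbove]
    rw [← majInd_diff m i x, ← majInd_diff m i y]
    simp only [bscW, if_true, reduceCtorEq, if_false]
    ring
  simp_rw [Finset.mul_sum (s := (Finset.univ : Finset (Fin (2 * m + 1))))]
  have hc : ∀ x : Fin (2 * m + 1) → Bool, ∑ y : Fin (2 * m + 1) → Bool,
      ∑ i, majInd (2 * m + 1) x * majInd (2 * m + 1) y *
        ((∏ j : Fin (2 * m), if y (i.succAbove j) = x (i.succAbove j) then 1 - α else α) *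
        (if y i = x i then -1 else 1)) = ∑ i, ∑ y : Fin (2 * m + 1) → Bool,
       majInd (2 * m + 1) x * majInd (2 * m + 1) y *
        ((∏ j : Fin (2 * m), if y (i.succAbove j) = x (i.succAbove j) then 1 - α else α) *
        (if y i = x i then -1 else 1)) := fun x => Finset.sum_comm
  simp_rw [hc]
  rw [Finset.sum_comm]
  simp_rw [key]
  simp

/-! ### Balanced words and a trigonometric integral -/

lemma sum_balInd (m : ℕ) : ∑ x, balInd m x = (m.centralBinom : ℝ) := by
  unfold balInd
  rw [Finset.sum_boole]
  congr 1
  have : (Finset.powersetCard m (Finset.univ : Finset (Fin (2 * m)))).card = m.centralBinom := by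
    simp [Nat.centralBinom]
  rw [← this]
  refine Finset.card_bij' (fun x _ => Finset.univ.filter (fun i => x i = true))
    (fun s _ => fun i => decide (i ∈ s)) (fun x hx => ?_) (fun s hs => ?_)
    (fun x _ => ?_) (fun s _ => ?_)
  · exact Finset.mem_powersetCard.2 ⟨Finset.subset_univ _, (Finset.mem_filter.1 hx).2⟩
  · refine Finset.mem_filter.2 ⟨Finset.mem_univ _, ?_⟩
    simpa [hw] using (Finset.mem_powersetCard.1 hs).2
  · ext i
    simp
  · ext i
    simp

/-- Characteristic function of the centred weight of the channel output for a balanced input. -/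
lemma charFun_bscW (m : ℕ) (α s : ℝ) (x : Fin (2 * m) → Bool) (hx : hw x = m) :
    ∑ y, (bscW α x y : ℂ) * Complex.exp (2 * ((hw y : ℂ) - m) * Complex.I * s)
      = (((1 - 4 * (α * (1 - α)) * Real.sin s ^ 2) ^ m : ℝ) : ℂ) := by
  set e : ℂ := Complex.exp (2 * Complex.I * s) with he
  have he0 : e ≠ 0 := Complex.exp_ne_zero _
  have h1 : ∀ y : Fin (2 * m) → Bool,
      (bscW α x y : ℂ) * Complex.exp (2 * ((hw y : ℂ) - m) * Complex.I * s)
      = (e ^ m)⁻¹ * ∏ i, ((if y i = x i then 1 - (α : ℂ) else α) *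
          (if y i = true then e else 1)) := by
    intro y
    have : 2 * ((hw y : ℂ) - m) * Complex.I * s
        = (hw y : ℂ) * (2 * Complex.I * s) - (m : ℂ) * (2 * Complex.I * s) := by ring
    rw [this, Complex.exp_sub, Complex.exp_nat_mul, Complex.exp_nat_mul, ← he,
      Finset.prod_mul_distrib]
    have h2 : (∏ i, if y i = true then e else 1) = e ^ hw y := by
      rw [Finset.prod_ite]; simp [hw]
    rw [h2]
    unfold bscW
    push_cast [apply_ite (Complex.ofReal)]
    field_simp
  simp_rw [h1]
  rw [← Finset.mul_sum]
  have h3 := Finset.prod_univ_sum (fun _ : Fin (2 * m) => (Finset.univ : Finset Bool))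
    (fun i b => (if b = x i then 1 - (α : ℂ) else α) * (if b = true then e else 1))
  rw [Fintype.piFinset_univ] at h3
  rw [← h3]
  have h4 : ∀ i, (∑ b : Bool, (if b = x i then 1 - (α : ℂ) else α) * (if b = true then e else 1))
      = if x i = true then (1 - (α : ℂ)) * e + α else α * e + (1 - α) := by
    intro i
    cases x i <;> simp
  simp_rw [h4]
  rw [Finset.prod_ite]
  have h5 : (Finset.univ.filter (fun i => ¬ x i = true)).card = m := by
    have h6 := Finset.card_filter_add_card_filter_not (s := (Finset.univ : Finset (Fin (2 * m))))
      (fun i => x i = true)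
    have h7 : (Finset.univ.filter (fun i => x i = true)).card = m := hx
    simp only [Finset.card_univ, Fintype.card_fin] at h6
    omega
  have h7 : (Finset.univ.filter (fun i => x i = true)).card = m := hx
  rw [Finset.prod_const, Finset.prod_const, h5, h7, ← mul_pow, ← inv_pow, ← mul_pow]
  push_cast
  congr 1
  have hc : e = Complex.exp (Complex.I * s) ^ 2 := by
    rw [← Complex.exp_nat_mul, he]; congr 1; push_cast; ring
  have hs : Complex.sin s = (Complex.exp (-(s : ℂ) * Complex.I) - Complex.exp (s * Complex.I))
      * Complex.I / 2 := rfl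
  rw [hs, neg_mul, Complex.exp_neg, mul_comm (s : ℂ) Complex.I, hc]
  have hz := Complex.exp_ne_zero (Complex.I * s)
  set z := Complex.exp (Complex.I * s)
  field_simp
  ring_nf
  simp only [Complex.I_sq]
  ring

/-- Orthogonality of the characters `s ↦ exp(2iks)` over a period. -/
lemma integral_exp_int (k : ℤ) (hk : k ≠ 0) :
    ∫ s in (-(Real.pi / 2))..(Real.pi / 2), Complex.exp (2 * (k : ℂ) * Complex.I * (s : ℂ)) = 0 := by
  have hc : (2 * (k : ℂ) * Complex.I) ≠ 0 := by
    have : (k : ℂ) ≠ 0 := by exact_mod_cast hk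
    simp [this]
  rw [integral_exp_mul_complex hc]
  rw [div_eq_zero_iff]
  left
  rw [sub_eq_zero, Complex.exp_eq_exp_iff_exists_int]
  refine ⟨k, ?_⟩
  push_cast
  ring

/-- Fourier inversion: the probability that a balanced input has a balanced output. -/
lemma sum_balInd_bscW (m : ℕ) (α : ℝ) (x : Fin (2 * m) → Bool) (hx : hw x = m) :
    Real.pi * ∑ y, balInd m y * bscW α x y
      = ∫ s in (-(Real.pi / 2))..(Real.pi / 2), (1 - 4 * (α * (1 - α)) * Real.sin s ^ 2) ^ m := by
  apply Complex.ofReal_injective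
  rw [← intervalIntegral.integral_ofReal]
  simp_rw [← charFun_bscW m α _ x hx]
  rw [intervalIntegral.integral_finsetSum]
  · push_cast
    rw [Finset.mul_sum]
    apply Finset.sum_congr rfl
    intro y _
    rw [intervalIntegral.integral_const_mul]
    unfold balInd
    split_ifs with h
    · simp [h]; ring
    · have := integral_exp_int ((hw y : ℤ) - m) (by omega)
      push_cast at this
      rw [this]
      simp
  · intro y _
    apply Continuous.intervalIntegrable
    fun_prop

/-- `∫_{-1}^1 (1-u²)^m du = 2·4^m / ((2m+1) C(2m,m))`. -/
lemma integral_one_sub_sq (m : ℕ) :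
    (2 * m + 1 : ℝ) * m.centralBinom * ∫ u in (-1 : ℝ)..1, (1 - u ^ 2) ^ m = 2 * 4 ^ m := by
  induction m with
  | zero => norm_num
  | succ m ih =>
    have hrec : (2 * m + 3 : ℝ) * (∫ u in (-1 : ℝ)..1, (1 - u ^ 2) ^ (m + 1))
        = (2 * m + 2) * ∫ u in (-1 : ℝ)..1, (1 - u ^ 2) ^ m := by
      -- The boundary values of this primitive vanish at `±1`.
      have hd : ∀ u ∈ Set.uIcc (-1 : ℝ) 1, HasDerivAt (fun u : ℝ => u * (1 - u ^ 2) ^ (m + 1))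
          ((2 * m + 3 : ℝ) * (1 - u ^ 2) ^ (m + 1) - (2 * m + 2) * (1 - u ^ 2) ^ m) u := by
        intro u _
        have h1 : HasDerivAt (fun u : ℝ => 1 - u ^ 2) (-(2 * u)) u := by
          simpa using (hasDerivAt_pow 2 u).const_sub 1
        refine ((hasDerivAt_id u).mul (h1.pow (m + 1))).congr_deriv ?_
        simp
        ring
      have := intervalIntegral.integral_eq_sub_of_hasDerivAt hd
        (Continuous.intervalIntegrable (by fun_prop) _ _)
      rw [intervalIntegral.integral_sub (Continuous.intervalIntegrable (by fun_prop) _ _)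
        (Continuous.intervalIntegrable (by fun_prop) _ _),
        intervalIntegral.integral_const_mul, intervalIntegral.integral_const_mul] at this
      norm_num at this
      linarith
    have hb : ((m : ℝ) + 1) * (m + 1).centralBinom = 2 * (2 * m + 1) * m.centralBinom := by
      exact_mod_cast Nat.succ_mul_centralBinom_succ m
    have hm : (m : ℝ) + 1 ≠ 0 := by positivity
    apply mul_left_cancel₀ hm
    push_cast
    rw [pow_succ]
    linear_combination ((m : ℝ) + 1) * ((m + 1).centralBinom : ℝ) * hrec +
      (2 * m + 2 : ℝ) * (∫ u in (-1 : ℝ)..1, (1 - u ^ 2) ^ m) * hb + 2 * (2 * m + 2 : ℝ) * ih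

/-- Inserting the factor `cos s ≤ 1` permits the substitution `u = c sin s`, which turns the
integral into that of `(1 - u²)^m` over `[-c, c]`; the two missing tails are each at most
`(1 - c²)^m`. -/
lemma integral_sin_lower (m : ℕ) (c : ℝ) (hc : 0 < c) (hc1 : c ≤ 1) :
    (∫ u in (-1 : ℝ)..1, (1 - u ^ 2) ^ m) - 2 * (1 - c ^ 2) ^ m ≤
      c * ∫ s in (-(Real.pi / 2))..(Real.pi / 2), (1 - c ^ 2 * Real.sin s ^ 2) ^ m := by
  have hpi := Real.pi_pos
  have h1 : ∫ u in (-c)..c, (1 - u ^ 2) ^ m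
      ≤ c * ∫ s in (-(Real.pi / 2))..(Real.pi / 2), (1 - c ^ 2 * Real.sin s ^ 2) ^ m := by
    have hsub := intervalIntegral.integral_comp_mul_deriv (a := -(Real.pi / 2)) (b := Real.pi / 2)
      (f := fun s => c * Real.sin s) (f' := fun s => c * Real.cos s)
      (g := fun u => (1 - u ^ 2) ^ m)
      (fun s _ => (Real.hasDerivAt_sin s).const_mul c) (by fun_prop) (by fun_prop)
    simp at hsub
    rw [← hsub, ← intervalIntegral.integral_const_mul]
    apply intervalIntegral.integral_mono_on (by linarith)
      (Continuous.intervalIntegrable (by fun_prop) _ _)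
      (Continuous.intervalIntegrable (by fun_prop) _ _)
    intro s _
    have h2 : 0 ≤ 1 - c ^ 2 * Real.sin s ^ 2 := by
      nlinarith [Real.sin_sq_le_one s, sq_nonneg (Real.sin s)]
    have h3 := pow_nonneg h2 m
    simp only [mul_pow]
    nlinarith [mul_nonneg (mul_nonneg h3 hc.le) (sub_nonneg.2 (Real.cos_le_one s))]
  have hi : ∀ a b : ℝ, IntervalIntegrable (fun u : ℝ => (1 - u ^ 2) ^ m) volume a b :=
    fun a b => Continuous.intervalIntegrable (by fun_prop) _ _
  have htail : ∀ a b : ℝ, a ≤ b → b - a ≤ 1 → (∀ u ∈ Set.Icc a b, c ^ 2 ≤ u ^ 2 ∧ u ^ 2 ≤ 1) →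
      ∫ u in a..b, (1 - u ^ 2) ^ m ≤ (1 - c ^ 2) ^ m := by
    intro a b hab hba hu
    calc ∫ u in a..b, (1 - u ^ 2) ^ m ≤ ∫ _u in a..b, (1 - c ^ 2) ^ m := by
          apply intervalIntegral.integral_mono_on hab (hi _ _) (by simp)
          intro u h
          obtain ⟨h1, h2⟩ := hu u h
          exact pow_le_pow_left₀ (by linarith) (by linarith) m
      _ = (b - a) * (1 - c ^ 2) ^ m := by simp
      _ ≤ _ := by
          have : 0 ≤ (1 - c ^ 2) ^ m := pow_nonneg (by nlinarith) m
          nlinarith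
  have t1 := htail (-1) (-c) (by linarith) (by linarith) (by
    rintro u ⟨h1, h2⟩; constructor <;> nlinarith)
  have t2 := htail c 1 (by linarith) (by linarith) (by
    rintro u ⟨h1, h2⟩; constructor <;> nlinarith)
  have e1 := intervalIntegral.integral_add_adjacent_intervals (hi (-1) (-c)) (hi (-c) c)
  have e2 := intervalIntegral.integral_add_adjacent_intervals (hi (-1) c) (hi c 1)
  linarith

/-! ### The flip probability of the majority -/

/-- `P[maj Y = 0 | maj X = 1]` for `n = 2m+1`. -/
def flipProb (m : ℕ) (α : ℝ) : ℝ := 1 - stabT (2 * m + 1) α / 4 ^ m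

lemma flipProb_zero (m : ℕ) : flipProb m 0 = 0 := by
  have hW : ∀ x y : Fin (2 * m + 1) → Bool, bscW 0 x y = if y = x then 1 else 0 := by
    intro x y
    unfold bscW
    split_ifs with h
    · simp [h]
    · obtain ⟨i, hi⟩ := Function.ne_iff.1 h
      exact Finset.prod_eq_zero (Finset.mem_univ i) (by simp [hi])
  have hsq : ∀ x, majInd (2 * m + 1) x * majInd (2 * m + 1) x = majInd (2 * m + 1) x := by
    intro x; unfold majInd; split_ifs <;> norm_num
  have h4 : (4 : ℝ) ^ m ≠ 0 := by positivity
  unfold flipProb stabT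
  simp_rw [hW]
  simp only [mul_ite, mul_one, mul_zero, Finset.sum_ite_eq', Finset.mem_univ, if_true, hsq]
  rw [sum_majInd, div_self h4, sub_self]

lemma flipProb_half (m : ℕ) : flipProb m (1 / 2) = 1 / 2 := by
  have hW : ∀ x y : Fin (2 * m + 1) → Bool, bscW (1 / 2) x y = (1 / 2) ^ (2 * m + 1) := by
    intro x y
    unfold bscW
    norm_num
    rw [one_div, inv_pow]
  unfold flipProb stabT
  simp_rw [hW, ← Finset.sum_mul, ← Finset.mul_sum, sum_majInd, ← Finset.sum_mul, sum_majInd]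
  have h4 : (4 : ℝ) ^ m ≠ 0 := by positivity
  rw [pow_succ, pow_mul]
  norm_num
  field_simp
  rw [← mul_pow]
  norm_num

/-- The derivative of the flip probability is at least `1 - δ` times that of its limit
`Θ(a) = arccos(1 - 2a) / π`, where `δ = (2m+1)(1-2a)^(2m)`. -/
lemma flipProb_deriv (m : ℕ) (a : ℝ) (ha0 : 0 < a) (ha1 : a < 1) :
    ∃ D : ℝ, HasDerivAt (flipProb m) D a ∧
      (1 - (2 * m + 1) * ((1 - 2 * a) ^ 2) ^ m) *
        (2 / (Real.pi * √(1 - (1 - 2 * a) ^ 2))) ≤ D := by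
  have hpi := Real.pi_pos
  set c := √(1 - (1 - 2 * a) ^ 2) with hc
  have hpos : 0 < 1 - (1 - 2 * a) ^ 2 := by nlinarith [mul_pos ha0 (sub_pos.2 ha1)]
  have hc0 : 0 < c := Real.sqrt_pos.2 hpos
  have hc2 : c ^ 2 = 1 - (1 - 2 * a) ^ 2 := Real.sq_sqrt hpos.le
  have hc1 : c ≤ 1 := by nlinarith [sq_nonneg (1 - 2 * a)]
  have h4 : (0 : ℝ) < 4 ^ m := by positivity
  refine ⟨_, ((hasDerivAt_stabT m a).div_const _).const_sub 1, ?_⟩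
  set J := ∫ s in (-(Real.pi / 2))..(Real.pi / 2), (1 - c ^ 2 * Real.sin s ^ 2) ^ m with hJ
  have hB : Real.pi * ∑ x : Fin (2 * m) → Bool, ∑ y : Fin (2 * m) → Bool,
        balInd m x * balInd m y * bscW a x y = m.centralBinom * J := by
    rw [← sum_balInd, Finset.mul_sum, Finset.sum_mul]
    apply Finset.sum_congr rfl
    intro x _
    by_cases hx : hw x = m
    · have := sum_balInd_bscW m a x hx
      have e : (4 * (a * (1 - a))) = c ^ 2 := by rw [hc2]; ring
      rw [e, ← hJ] at this
      simp_rw [mul_assoc, ← Finset.mul_sum]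
      rw [← this]
      ring
    · simp [balInd, hx]
  set B := ∑ x : Fin (2 * m) → Bool, ∑ y : Fin (2 * m) → Bool,
        balInd m x * balInd m y * bscW a x y
  have hlow := integral_sin_lower m c hc0 hc1
  rw [← hJ] at hlow
  have hG := integral_one_sub_sq m
  have hr : 1 - c ^ 2 = (1 - 2 * a) ^ 2 := by rw [hc2]; ring
  rw [hr] at hlow
  set G := ∫ u in (-1 : ℝ)..1, (1 - u ^ 2) ^ m
  set r := ((1 - 2 * a) ^ 2) ^ m
  have hr0 : 0 ≤ r := by positivity
  have hC : (m.centralBinom : ℝ) ≤ 4 ^ m := by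
    have : m.centralBinom ≤ 2 ^ (2 * m) := by
      unfold Nat.centralBinom; exact Nat.choose_le_two_pow _ _
    rw [pow_mul] at this
    exact_mod_cast this
  set C := (m.centralBinom : ℝ)
  have hC0 : 0 ≤ C := Nat.cast_nonneg _
  -- `integral_sin_lower` times `(2m+1) C(2m,m)`: the integral `G` becomes `2·4^m` exactly,
  -- and the tail `2r` is absorbed using `C(2m,m) ≤ 4^m`.
  have k1 := mul_le_mul_of_nonneg_left hlow (show 0 ≤ (2 * m + 1 : ℝ) * C by positivity)
  have k2 : (2 * m + 1 : ℝ) * C * r ≤ (2 * m + 1) * 4 ^ m * r := by gcongr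
  have k3 : (2 * m + 1 : ℝ) * C * (c * J) = (2 * m + 1) * c * (Real.pi * B) := by rw [hB]; ring
  have e1 : (1 - (2 * m + 1) * r) * (2 / (Real.pi * c))
      = (2 - 2 * (2 * m + 1) * r) / (Real.pi * c) := by ring
  have e2 : -(-((2 * m + 1 : ℝ) * B) / 4 ^ m) = (2 * m + 1) * B / 4 ^ m := by ring
  rw [e1, e2, div_le_div_iff₀ (by positivity) h4]
  nlinarith

/-- Comparison of `flipProb` with its limit `Θ(a) = arccos(1 - 2a) / π`: both equal `1/2` at
`a = 1/2`, and `flipProb - (1 - δ) Θ` is monotone on `[α, 1/2]`. -/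
lemma flipProb_le (m : ℕ) (α : ℝ) (h0 : 0 < α) (h1 : α ≤ 1 / 2) :
    flipProb m α ≤ Real.arccos (1 - 2 * α) / Real.pi +
      (2 * m + 1) * ((1 - 2 * α) ^ 2) ^ m * (1 / 2 - Real.arccos (1 - 2 * α) / Real.pi) := by
  set δ := (2 * m + 1) * ((1 - 2 * α) ^ 2) ^ m with hδ
  have hpi := Real.pi_pos
  have hT : ∀ a : ℝ, 0 < a → a < 1 → HasDerivAt (fun a => Real.arccos (1 - 2 * a) / Real.pi)
      (2 / (Real.pi * √(1 - (1 - 2 * a) ^ 2))) a := by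
    intro a ha0 ha1
    have h2 : HasDerivAt (fun a : ℝ => 1 - 2 * a) (-2) a := by
      simpa using ((hasDerivAt_id a).const_mul 2).const_sub 1
    have h3 := (Real.hasDerivAt_arccos (x := 1 - 2 * a) (by linarith) (by linarith)).comp a h2
    refine (h3.div_const Real.pi).congr_deriv ?_
    rw [mul_comm Real.pi]
    field_simp
  have hmono : MonotoneOn (fun a => flipProb m a - (1 - δ) * (Real.arccos (1 - 2 * a) / Real.pi))
      (Set.Icc α (1 / 2)) := by
    have hd : ∀ a ∈ Set.Icc α (1 / 2 : ℝ), ∃ D, HasDerivAt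
        (fun a => flipProb m a - (1 - δ) * (Real.arccos (1 - 2 * a) / Real.pi)) D a ∧ 0 ≤ D := by
      rintro a ⟨ha0, ha1⟩
      obtain ⟨D, hD, hle⟩ := flipProb_deriv m a (by linarith) (by linarith)
      refine ⟨_, hD.sub ((hT a (by linarith) (by linarith)).const_mul (1 - δ)), ?_⟩
      have : (2 * m + 1) * ((1 - 2 * a) ^ 2) ^ m ≤ δ := by
        rw [hδ]
        have h5 : (1 - 2 * a) ^ 2 ≤ (1 - 2 * α) ^ 2 := by
          apply pow_le_pow_left₀ <;> linarith
        gcongr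
      have h6 : 0 ≤ 2 / (Real.pi * √(1 - (1 - 2 * a) ^ 2)) := by positivity
      nlinarith
    apply monotoneOn_of_deriv_nonneg (convex_Icc _ _)
    · intro a ha
      obtain ⟨D, hD, _⟩ := hd a ha
      exact hD.continuousAt.continuousWithinAt
    · intro a ha
      obtain ⟨D, hD, _⟩ := hd a (interior_subset ha)
      exact hD.differentiableAt.differentiableWithinAt
    · intro a ha
      obtain ⟨D, hD, h⟩ := hd a (interior_subset ha)
      rw [hD.deriv]
      exact h
  have := hmono (Set.left_mem_Icc.2 h1) (Set.right_mem_Icc.2 h1) h1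
  simp only [flipProb_half] at this
  have e : Real.arccos (1 - 2 * (1 / 2)) / Real.pi = 1 / 2 := by
    norm_num
    field_simp
  rw [e] at this
  linarith

/-! ### Entropy -/

/-- Gibbs' inequality in base 2, termwise: `-q log q ≤ -q log r + (r - q) / ln 2`. -/
lemma gibbs_term (q r : ℝ) (hq : 0 ≤ q) (hr : 0 < r) :
    -(q * Real.logb 2 q) ≤ -(q * Real.logb 2 r) + (r - q) / Real.log 2 := by
  have hl : 0 < Real.log 2 := Real.log_pos (by norm_num)
  have key : -(q * Real.log q) ≤ -(q * Real.log r) + (r - q) := by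
    rcases hq.eq_or_lt with h | h
    · rw [← h]; simp; exact hr.le
    · have h1 := Real.log_le_sub_one_of_pos (div_pos hr h)
      rw [Real.log_div hr.ne' h.ne'] at h1
      have h2 := mul_le_mul_of_nonneg_left h1 hq
      have h3 : q * (r / q - 1) = r - q := by field_simp
      linarith
  have e1 : -(q * Real.logb 2 q) = -(q * Real.log q) / Real.log 2 := by
    unfold Real.logb; ring
  have e2 : -(q * Real.logb 2 r) + (r - q) / Real.log 2
      = (-(q * Real.log r) + (r - q)) / Real.log 2 := by
    unfold Real.logb; ring
  rw [e1, e2]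
  gcongr

/-- Cross-entropy bound: the conditional law of `Y^n` is compared with the law that puts mass
`1 - t` uniformly on majority-one words and `t` uniformly on majority-zero words. -/
lemma entropy_le (m : ℕ) (α t : ℝ) (h0 : 0 ≤ α) (h1 : α ≤ 1) (ht0 : 0 < t) (ht1 : t ≤ 1 / 2)
    (hD : flipProb m α ≤ t) :
    entropy (fun y : Fin (2 * m + 1) → Bool =>
        noisyPMF (2 * m + 1) α (majF (2 * m + 1)) true y /
          (∑ y', noisyPMF (2 * m + 1) α (majF (2 * m + 1)) true y'))
      ≤ 2 * m + binEnt t := by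
  have hl : 0 < Real.log 2 := Real.log_pos (by norm_num)
  have h4 : (0 : ℝ) < 4 ^ m := by positivity
  have h2n : (2 : ℝ) ^ (2 * m + 1) = 2 * 4 ^ m := by rw [pow_succ, pow_mul]; norm_num; ring
  have hp : ∀ y, noisyPMF (2 * m + 1) α (majF (2 * m + 1)) true y
      = (2 * 4 ^ m)⁻¹ * ∑ x, majInd (2 * m + 1) x * bscW α x y := by
    intro y
    unfold noisyPMF
    rw [Finset.mul_sum]
    apply Finset.sum_congr rfl
    intro x _
    simp only [majF, decide_eq_true_eq, majInd, bscW, h2n]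
    split_ifs <;> simp
  have hsum : ∑ y, ∑ x, majInd (2 * m + 1) x * bscW α x y = 4 ^ m := by
    rw [Finset.sum_comm]
    simp_rw [← Finset.mul_sum, sum_bscW, mul_one]
    exact sum_majInd m
  set q : (Fin (2 * m + 1) → Bool) → ℝ :=
    fun y => (∑ x, majInd (2 * m + 1) x * bscW α x y) / 4 ^ m with hq
  have hfun : (fun y : Fin (2 * m + 1) → Bool =>
        noisyPMF (2 * m + 1) α (majF (2 * m + 1)) true y /
          (∑ y', noisyPMF (2 * m + 1) α (majF (2 * m + 1)) true y')) = q := by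
    funext y
    simp_rw [hp, ← Finset.mul_sum]
    rw [hsum, hq]
    field_simp
  rw [hfun]
  have hq0 : ∀ y, 0 ≤ q y := by
    intro y
    apply div_nonneg _ h4.le
    apply Finset.sum_nonneg
    intro x _
    apply mul_nonneg _ (bscW_nonneg h0 h1 x y)
    unfold majInd; split_ifs <;> norm_num
  have hq1 : ∑ y, q y = 1 := by
    rw [hq, ← Finset.sum_div, hsum, div_self h4.ne']
  have hqg : ∑ y, q y * majInd (2 * m + 1) y = 1 - flipProb m α := by
    unfold flipProb stabT
    rw [Finset.sum_comm, sub_sub_cancel, Finset.sum_div]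
    apply Finset.sum_congr rfl
    intro y _
    rw [hq, div_mul_eq_mul_div, Finset.sum_mul]
    congr 1
    apply Finset.sum_congr rfl
    intro x _
    ring
  set r : (Fin (2 * m + 1) → Bool) → ℝ :=
    fun y => (majInd (2 * m + 1) y * (1 - 2 * t) + t) / 4 ^ m with hr
  have hr1 : ∑ y, r y = 1 := by
    rw [hr, ← Finset.sum_div, Finset.sum_add_distrib, ← Finset.sum_mul, sum_majInd]
    simp [h2n]
    field_simp
    ring
  have hr0 : ∀ y, 0 < r y ∧ Real.logb 2 (r y) =
      majInd (2 * m + 1) y * (Real.logb 2 (1 - t) - Real.logb 2 t) + Real.logb 2 t - 2 * m := by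
    intro y
    have hlog4 : Real.logb 2 (4 ^ m) = 2 * m := by
      rw [Real.logb_pow, show (4 : ℝ) = 2 ^ 2 by norm_num, Real.logb_pow, Real.logb_self_eq_one]
      · push_cast; ring
      · norm_num
    have hry : r y = (majInd (2 * m + 1) y * (1 - 2 * t) + t) / 4 ^ m := rfl
    have hg : majInd (2 * m + 1) y = 1 ∨ majInd (2 * m + 1) y = 0 := by
      unfold majInd; split_ifs <;> simp
    rw [hry]
    rcases hg with hg | hg
    · rw [hg, show (1 : ℝ) * (1 - 2 * t) + t = 1 - t by ring]
      refine ⟨div_pos (by linarith) h4, ?_⟩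
      rw [Real.logb_div (by linarith) h4.ne', hlog4]
      ring
    · rw [hg, zero_mul, zero_add, zero_mul, zero_add]
      refine ⟨div_pos ht0 h4, ?_⟩
      rw [Real.logb_div ht0.ne' h4.ne', hlog4]
  have hmain : entropy q ≤ ∑ y, (-(q y * Real.logb 2 (r y)) + (r y - q y) / Real.log 2) := by
    unfold entropy
    exact Finset.sum_le_sum (fun y _ => gibbs_term _ _ (hq0 y) (hr0 y).1)
  have hcross : ∑ y, (-(q y * Real.logb 2 (r y)) + (r y - q y) / Real.log 2)
      = -((∑ y, q y * majInd (2 * m + 1) y) * (Real.logb 2 (1 - t) - Real.logb 2 t))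
        - (∑ y, q y) * (Real.logb 2 t - 2 * m) + ((∑ y, r y) - ∑ y, q y) / Real.log 2 := by
    rw [Finset.sum_mul, Finset.sum_mul, ← Finset.sum_sub_distrib (f := r), Finset.sum_div,
      ← Finset.sum_neg_distrib, ← Finset.sum_sub_distrib, ← Finset.sum_add_distrib]
    apply Finset.sum_congr rfl
    intro y _
    rw [(hr0 y).2]
    ring
  rw [hcross, hqg, hq1, hr1, sub_self, zero_div] at hmain
  have hslope : Real.logb 2 t ≤ Real.logb 2 (1 - t) :=
    Real.logb_le_logb_of_le (by norm_num) ht0 (by linarith)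
  unfold binEnt
  nlinarith [mul_nonneg (sub_nonneg.2 hD) (sub_nonneg.2 hslope)]

lemma continuous_binEnt : Continuous binEnt := by
  have : binEnt = fun p => Real.binEntropy p / Real.log 2 := by
    funext p
    unfold binEnt Real.logb
    rw [Real.binEntropy, Real.log_inv, Real.log_inv]
    ring
  rw [this]
  exact Real.binEntropy_continuous.div_const _

/-- Asymptotically the flip probability is at most (a slight perturbation towards `1/2` of)
`arccos(1 - 2α) / π`. -/
lemma flipProb_eventually (α : ℝ) (h0 : 0 ≤ α) (h1 : α ≤ 1 / 2) (δ : ℝ) (hδ : 0 < δ) :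
    ∃ M : ℕ, ∀ m, M ≤ m → flipProb m α ≤ Real.arccos (1 - 2 * α) / Real.pi +
      δ * (1 / 2 - Real.arccos (1 - 2 * α) / Real.pi) := by
  rcases h0.eq_or_lt with h | h
  · refine ⟨0, fun m _ => ?_⟩
    rw [← h, flipProb_zero]
    simp
    linarith
  have hT : Real.arccos (1 - 2 * α) / Real.pi ≤ 1 / 2 := by
    rw [div_le_iff₀ Real.pi_pos]
    have := Real.arccos_le_pi_div_two.2 (show 0 ≤ 1 - 2 * α by linarith)
    linarith
  have hr : (1 - 2 * α) ^ 2 < 1 := by nlinarith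
  have l1 := tendsto_self_mul_const_pow_of_lt_one (sq_nonneg (1 - 2 * α)) hr
  have l2 := tendsto_pow_atTop_nhds_zero_of_lt_one (sq_nonneg (1 - 2 * α)) hr
  have l3 := (l1.const_mul 2).add l2
  rw [mul_zero, add_zero] at l3
  obtain ⟨M, hM⟩ := Filter.eventually_atTop.1 (l3.eventually (gt_mem_nhds hδ))
  refine ⟨M, fun m hm => (flipProb_le m α h h1).trans ?_⟩
  have := hM m hm
  have h5 : (2 * m + 1) * ((1 - 2 * α) ^ 2) ^ m ≤ δ := by linarith
  have := mul_le_mul_of_nonneg_right h5 (sub_nonneg.2 hT)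
  linarith

end

theorem stmt17 (α : ℝ) (hα0 : 0 ≤ α) (hα1 : α ≤ 1/2) :
    ∀ ε : ℝ, 0 < ε → ∃ N : ℕ, ∀ n : ℕ, N ≤ n → Odd n →
      entropy (fun y : Fin n → Bool =>
        noisyPMF n α (majF n) true y / (∑ y' : Fin n → Bool, noisyPMF n α (majF n) true y'))
        ≤ (n : ℝ) - 1 + muF α + ε := by
  intro ε hε
  set Θ := Real.arccos (1 - 2 * α) / Real.pi with hΘ
  have hΘ0 : 0 ≤ Θ := div_nonneg (Real.arccos_nonneg _) Real.pi_pos.le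
  have hΘ1 : Θ ≤ 1 / 2 := by
    rw [hΘ, div_le_iff₀ Real.pi_pos]
    have := Real.arccos_le_pi_div_two.2 (show 0 ≤ 1 - 2 * α by linarith)
    linarith
  -- The cross-entropy parameter is taken slightly above `Θ` (unless `Θ = 1/2`), so that it is
  -- positive and dominates the flip probability for large `n`.
  have hcont : Continuous (fun δ : ℝ => binEnt (Θ + δ * (1 / 2 - Θ))) :=
    continuous_binEnt.comp (by fun_prop)
  have hev : ∀ᶠ δ in nhds (0 : ℝ), binEnt (Θ + δ * (1 / 2 - Θ)) < muF α + ε := by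
    apply hcont.continuousAt.eventually_lt continuousAt_const
    simp only [zero_mul, add_zero]
    unfold muF
    linarith
  obtain ⟨η, hη, hball⟩ := Metric.eventually_nhds_iff.1 hev
  set δ := min (η / 2) 1 with hδ
  have hδ0 : 0 < δ := lt_min (by linarith) one_pos
  have hδ1 : δ ≤ 1 := min_le_right _ _
  have hent := hball (y := δ) (by
    rw [Real.dist_eq, sub_zero, abs_of_pos hδ0]
    exact lt_of_le_of_lt (min_le_left _ _) (by linarith))
  obtain ⟨M, hM⟩ := flipProb_eventually α hα0 hα1 δ hδ0
  refine ⟨2 * M + 1, fun n hn hodd => ?_⟩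
  obtain ⟨m, rfl⟩ := hodd
  have := entropy_le m α (Θ + δ * (1 / 2 - Θ)) hα0 (by linarith) (by nlinarith)
    (by nlinarith) (hM m (by omega))
  push_cast
  linarith
end

section
/- There exist a constant c > 0 and α₀ ∈ (0,1/2) such that for every α ∈ (α₀, 1/2): liminf over odd n → ∞ of H(maj(X^n) | Y^n) ≥ 1 − (1/(π ln 2)) · ((1 − 2α)^2/(4α(1 − α))) − c(1 − 2α)^4, i.e., H(maj(X^n) | Y^n) ≥ 1 − (1/(π ln 2)) · ((1 − 2α)^2/(4α(1 − α))) − O((1 − 2α)^4) + o(1). -/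
/-!
Let `ρ = 1 - 2α`, let `f` be majority with values `±1`, and let `g(y) = E[f(X) | Y = y] = T_ρ f(y)`.
Given `Y = y`, the majority bit is Bernoulli with parameter `(1 + g(y)) / 2`, and
`h((1 + g)/2) ≥ 1 - g²/(2 ln 2) - g⁴/(3 ln 2)` (`entropy_term_ge`), so
`H(maj(X) | Y) ≥ 1 - E[g²]/(2 ln 2) - E[g⁴]/(3 ln 2)` (`condEnt_ge`).

* Second moment: `E[g²] = ∑_S ρ^(2|S|) f̂(S)² ≤ ρ² W₁ + ρ⁴` since `f` is balanced and has norm one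
  (`mean_noise_sq`, `stab_le_three`). The level-one weight `W₁` of majority on `2m + 1` bits is
  `(2m + 1) (C(2m, m) / 4^m)²`, the reciprocal of the Wallis product, and tends to `2/π`
  (`levelOne_majSign`).
* Fourth moment: hypercontractivity gives `E[g⁴] ≤ (∑_S (3ρ²)^|S| f̂(S)²)² ≤ 9ρ⁴`
  (`mean_noise_four`, `stab_le_two`).

Finally `ρ² ≤ ρ² / (4α(1 - α))`, as `4α(1 - α) = 1 - ρ²`. All facts about the cube are proved by
induction on the dimension, splitting off the first coordinate.
-/

open Finset MeasureTheory

namespace MajEnt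

noncomputable section

/-! ### Noise operator and stability on the cube -/

/-- Expectation of `f` under the uniform distribution on `{0,1}^n`. -/
def mean {n : ℕ} (f : (Fin n → Bool) → ℝ) : ℝ := ((2 : ℝ) ^ n)⁻¹ * ∑ x, f x

/-- The bit `b` as a sign: `true ↦ 1`, `false ↦ -1`. -/
def sgn (b : Bool) : ℝ := if b then 1 else -1

/-- The noise operator `T_ρ`, `ρ = 1 - 2α`: `noiseOp α f y = E[f(X) | Y = y]`. -/
def noiseOp {n : ℕ} (α : ℝ) (f : (Fin n → Bool) → ℝ) (y : Fin n → Bool) : ℝ :=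
  ∑ x, f x * ∏ i, (if y i = x i then 1 - α else α)

/-- Conditional mean of `f` over its first coordinate: the part `a` of the decomposition
`f(b, x) = a(x) + sgn b * d(x)`. -/
def evenPart {n : ℕ} (f : (Fin (n + 1) → Bool) → ℝ) (x : Fin n → Bool) : ℝ :=
  (f (Fin.cons true x) + f (Fin.cons false x)) / 2

/-- The part `d` of the decomposition `f(b, x) = a(x) + sgn b * d(x)`. -/
def oddPart {n : ℕ} (f : (Fin (n + 1) → Bool) → ℝ) (x : Fin n → Bool) : ℝ :=
  (f (Fin.cons true x) - f (Fin.cons false x)) / 2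

/-- Noise stability `∑_S t^|S| f̂(S)²`, defined by recursion on the number of coordinates so
that no Fourier expansion is needed. -/
def stab (t : ℝ) : (n : ℕ) → ((Fin n → Bool) → ℝ) → ℝ
  | 0, f => f (fun _ => false) ^ 2
  | n + 1, f => stab t n (evenPart f) + t * stab t n (oddPart f)

/-- Fourier weight of `f` at level one. -/
def levelOne {n : ℕ} (f : (Fin n → Bool) → ℝ) : ℝ :=
  ∑ i, mean (fun x => sgn (x i) * f x) ^ 2

lemma sum_insertNth {n : ℕ} (i : Fin (n + 1)) (f : (Fin (n + 1) → Bool) → ℝ) :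
    ∑ x, f x = ∑ x : Fin n → Bool,
      (f (i.insertNth true x) + f (i.insertNth false x)) := by
  rw [← (Fin.insertNthEquiv (fun _ => Bool) i).sum_comp, Fintype.sum_prod_type,
    Fintype.sum_bool, ← Finset.sum_add_distrib]
  rfl

lemma sum_cons {n : ℕ} (f : (Fin (n + 1) → Bool) → ℝ) :
    ∑ x, f x = ∑ x : Fin n → Bool, (f (Fin.cons true x) + f (Fin.cons false x)) := by
  simpa using sum_insertNth 0 f

lemma mean_succ {n : ℕ} (f : (Fin (n + 1) → Bool) → ℝ) : mean f = mean (evenPart f) := by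
  simp only [mean, evenPart, sum_cons f, ← Finset.sum_div, pow_succ]
  field_simp

lemma mean_add {n : ℕ} (f g : (Fin n → Bool) → ℝ) :
    mean (fun x => f x + g x) = mean f + mean g := by
  simp only [mean, Finset.sum_add_distrib, mul_add]

lemma mean_smul {n : ℕ} (c : ℝ) (f : (Fin n → Bool) → ℝ) :
    mean (fun x => c * f x) = c * mean f := by
  simp only [mean, ← Finset.mul_sum]; ring

lemma mean_mono {n : ℕ} {f g : (Fin n → Bool) → ℝ} (h : ∀ x, f x ≤ g x) :
    mean f ≤ mean g := by
  unfold mean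
  gcongr
  exact h _

lemma mean_zero (f : (Fin 0 → Bool) → ℝ) : mean f = f (fun _ => false) := by
  rw [mean, Fintype.sum_unique, pow_zero, inv_one, one_mul]
  exact congrArg f (Subsingleton.elim _ _)

lemma noiseOp_zero (α : ℝ) (f : (Fin 0 → Bool) → ℝ) (y : Fin 0 → Bool) :
    noiseOp α f y = f (fun _ => false) := by
  rw [noiseOp, Fintype.sum_unique, Finset.univ_eq_empty, Finset.prod_empty, mul_one]
  exact congrArg f (Subsingleton.elim _ _)

lemma noiseOp_cons {n : ℕ} (α : ℝ) (f : (Fin (n + 1) → Bool) → ℝ) (b : Bool)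
    (y : Fin n → Bool) :
    noiseOp α f (Fin.cons b y) =
      noiseOp α (evenPart f) y + sgn b * (1 - 2 * α) * noiseOp α (oddPart f) y := by
  unfold noiseOp
  rw [sum_cons, Finset.mul_sum, ← Finset.sum_add_distrib]
  refine Finset.sum_congr rfl fun x _ => ?_
  simp only [Fin.prod_univ_succ, Fin.cons_zero, Fin.cons_succ, evenPart, oddPart, sgn]
  cases b <;> simp <;> ring

/-- `E[(T_ρ f)²] = ∑_S ρ^(2|S|) f̂(S)²`. -/
lemma mean_noise_sq (α : ℝ) : ∀ (n : ℕ) (f : (Fin n → Bool) → ℝ),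
    mean (fun y => noiseOp α f y ^ 2) = stab ((1 - 2 * α) ^ 2) n f
  | 0, f => by simp [mean_zero, noiseOp_zero, stab]
  | n + 1, f => by
    rw [stab, ← mean_noise_sq α n, ← mean_noise_sq α n, mean_succ, ← mean_smul, ← mean_add]
    congr 1
    ext y
    simp only [evenPart.eq_1 (fun y => noiseOp α f y ^ 2), noiseOp_cons, sgn]
    simp
    ring

/-- Cauchy–Schwarz, in the form needed for the cross term of the fourth moment. -/
lemma mean_sq_mul_sq_le {n : ℕ} {u v : (Fin n → Bool) → ℝ} {A B : ℝ} (hA : 0 ≤ A) (hB : 0 ≤ B)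
    (hu : mean (fun x => u x ^ 4) ≤ A ^ 2) (hv : mean (fun x => v x ^ 4) ≤ B ^ 2) :
    mean (fun x => u x ^ 2 * v x ^ 2) ≤ A * B := by
  refine (abs_le_of_sq_le_sq' (b := A * B) ?_ (by positivity)).2
  have h := Finset.sum_mul_sq_le_sq_mul_sq Finset.univ (fun x => u x ^ 2) (fun x => v x ^ 2)
  simp only [← pow_mul] at h
  norm_num at h
  have h0 : 0 ≤ mean (fun x => v x ^ 4) := by
    unfold mean; positivity
  calc mean (fun x => u x ^ 2 * v x ^ 2) ^ 2
      ≤ mean (fun x => u x ^ 4) * mean (fun x => v x ^ 4) := by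
        unfold mean
        rw [mul_pow, mul_mul_mul_comm, ← sq]
        gcongr
    _ ≤ A ^ 2 * B ^ 2 := by gcongr
    _ = _ := by ring

lemma stab_nonneg {t : ℝ} (ht : 0 ≤ t) : ∀ (n : ℕ) (f : (Fin n → Bool) → ℝ), 0 ≤ stab t n f
  | 0, f => by unfold stab; positivity
  | n + 1, f => by
    have h1 := stab_nonneg ht n (evenPart f)
    have h2 := stab_nonneg ht n (oddPart f)
    unfold stab; positivity

/-- A form of Bonami's `(2,4)`-hypercontractive inequality, valid for every `ρ`: writing
`T_ρ = T_{1/√3} T_{√3 ρ}`, it says `E[(T_ρ f)⁴] ≤ (E[(T_{√3 ρ} f)²])²`. The induction expands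
`(u + ρ x v)⁴` over a sign `x`, where only the terms even in `x` survive. -/
lemma mean_noise_four (α : ℝ) : ∀ (n : ℕ) (f : (Fin n → Bool) → ℝ),
    mean (fun y => noiseOp α f y ^ 4) ≤ stab (3 * (1 - 2 * α) ^ 2) n f ^ 2
  | 0, f => by simp [mean_zero, noiseOp_zero, stab, ← pow_mul]
  | n + 1, f => by
    have h1 := mean_noise_four α n (evenPart f)
    have h2 := mean_noise_four α n (oddPart f)
    have p1 := stab_nonneg (t := 3 * (1 - 2 * α) ^ 2) (by positivity) n (evenPart f)
    have p2 := stab_nonneg (t := 3 * (1 - 2 * α) ^ 2) (by positivity) n (oddPart f)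
    have h3 := mean_sq_mul_sq_le p1 p2 h1 h2
    have key : mean (fun y => noiseOp α f y ^ 4) =
        mean (fun y => noiseOp α (evenPart f) y ^ 4)
        + (6 * (1 - 2 * α) ^ 2) *
          mean (fun y => noiseOp α (evenPart f) y ^ 2 * noiseOp α (oddPart f) y ^ 2)
        + (1 - 2 * α) ^ 4 * mean (fun y => noiseOp α (oddPart f) y ^ 4) := by
      rw [mean_succ, ← mean_smul, ← mean_smul, ← mean_add, ← mean_add]
      congr 1
      ext y
      simp only [evenPart.eq_1 (fun y => noiseOp α f y ^ 4), noiseOp_cons, sgn]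
      simp
      ring
    rw [key, stab]
    generalize stab (3 * (1 - 2 * α) ^ 2) n (evenPart f) = A at *
    generalize stab (3 * (1 - 2 * α) ^ 2) n (oddPart f) = B at *
    have e1 := mul_le_mul_of_nonneg_left h3 (show 0 ≤ 6 * (1 - 2 * α) ^ 2 by positivity)
    have e2 := mul_le_mul_of_nonneg_left h2 (show 0 ≤ (1 - 2 * α) ^ 4 by positivity)
    have e3 : 0 ≤ 8 * ((1 - 2 * α) ^ 4 * B ^ 2) := by positivity
    nlinarith

lemma mean_sq_succ {n : ℕ} (f : (Fin (n + 1) → Bool) → ℝ) :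
    mean (fun x => f x ^ 2) =
      mean (fun x => evenPart f x ^ 2) + mean (fun x => oddPart f x ^ 2) := by
  rw [mean_succ, ← mean_add]
  congr 1
  ext x
  simp only [evenPart, oddPart]
  ring

lemma mean_sq_nonneg {n : ℕ} (f : (Fin n → Bool) → ℝ) : 0 ≤ mean (fun x => f x ^ 2) := by
  unfold mean; positivity

/-- Every level bounded by weight one; `mean (f²)` is the total weight by Parseval. -/
lemma stab_le_one {t : ℝ} (h0 : 0 ≤ t) (h1 : t ≤ 1) : ∀ (n : ℕ) (f : (Fin n → Bool) → ℝ),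
    stab t n f ≤ mean (fun x => f x ^ 2)
  | 0, f => by
    simp [mean_zero, stab]
  | n + 1, f => by
    have e1 := stab_le_one h0 h1 n (evenPart f)
    have e2 := stab_le_one h0 h1 n (oddPart f)
    rw [stab, mean_sq_succ]
    nlinarith [mean_sq_nonneg (oddPart f), stab_nonneg h0 n (oddPart f)]

/-- Level zero is kept exactly, all higher levels are bounded by `t`. -/
lemma stab_le_two {t : ℝ} (h0 : 0 ≤ t) (h1 : t ≤ 1) : ∀ (n : ℕ) (f : (Fin n → Bool) → ℝ),
    stab t n f ≤ mean f ^ 2 + t * mean (fun x => f x ^ 2)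
  | 0, f => by
    simp [mean_zero, stab]
    positivity
  | n + 1, f => by
    have e1 := stab_le_two h0 h1 n (evenPart f)
    have e2 := mul_le_mul_of_nonneg_left (stab_le_one h0 h1 n (oddPart f)) h0
    rw [stab, mean_sq_succ, mean_succ]
    linarith

lemma levelOne_succ {n : ℕ} (f : (Fin (n + 1) → Bool) → ℝ) :
    levelOne f = mean (oddPart f) ^ 2 + levelOne (evenPart f) := by
  unfold levelOne
  rw [Fin.sum_univ_succ]
  congr 2
  · rw [mean_succ]
    congr 1
    ext x
    simp [evenPart, oddPart, sgn]
    ring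
  · ext i
    rw [mean_succ]
    congr 2
    ext x
    simp only [evenPart, Fin.cons_succ]
    ring

/-- Levels zero and one are kept exactly, all higher levels are bounded by `t ^ 2`. -/
lemma stab_le_three {t : ℝ} (h0 : 0 ≤ t) (h1 : t ≤ 1) : ∀ (n : ℕ) (f : (Fin n → Bool) → ℝ),
    stab t n f ≤ mean f ^ 2 + t * levelOne f + t ^ 2 * mean (fun x => f x ^ 2)
  | 0, f => by
    simp [mean_zero, stab, levelOne]
    positivity
  | n + 1, f => by
    have e1 := stab_le_three h0 h1 n (evenPart f)
    have e2 := mul_le_mul_of_nonneg_left (stab_le_two h0 h1 n (oddPart f)) h0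
    rw [stab, mean_sq_succ, levelOne_succ, mean_succ f]
    linarith

/-! ### The Fourier weights of majority -/

/-- Majority as a `±1`-valued function. -/
def majSign (n : ℕ) (x : Fin n → Bool) : ℝ := sgn (majF n x)

lemma mean_majSign_sq (n : ℕ) : mean (fun x => majSign n x ^ 2) = 1 := by
  have : ∀ x, majSign n x ^ 2 = 1 := fun x => by
    unfold majSign sgn; split_ifs <;> norm_num
  simp [mean, this]

lemma hw_not {n : ℕ} (x : Fin n → Bool) : hw x + hw (fun i => !x i) = n := by
  have := Finset.card_filter_add_card_filter_not (s := (Finset.univ : Finset (Fin n)))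
    (fun i => x i = true)
  simpa [hw] using this

/-- For odd `n`, complementing all bits flips the majority. -/
lemma mean_majSign {n : ℕ} (hn : Odd n) : mean (majSign n) = 0 := by
  have h : ∑ x, majSign n x = ∑ x, -majSign n x := by
    rw [← (Equiv.piCongrRight fun _ : Fin n => Equiv.boolNot).sum_comp]
    refine Finset.sum_congr rfl fun x _ => ?_
    have h1 := hw_not x
    obtain ⟨m, rfl⟩ := hn
    have : (Equiv.piCongrRight fun _ : Fin (2 * m + 1) => Equiv.boolNot) x = fun i => !x i := rfl
    rw [this]
    simp only [majSign, majF, sgn, decide_eq_true_eq]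
    split_ifs <;> first | omega | norm_num
  rw [Finset.sum_neg_distrib] at h
  rw [mean, show ∑ x, majSign n x = 0 by linarith, mul_zero]

lemma hw_insertNth {n : ℕ} (i : Fin (n + 1)) (b : Bool) (x : Fin n → Bool) :
    hw (i.insertNth b x : Fin (n + 1) → Bool) = (if b then 1 else 0) + hw x := by
  simp only [hw, Finset.card_filter]
  rw [Fin.sum_univ_succAbove _ i]
  simp

/-- There are `n.choose k` strings of weight `k`. -/
lemma card_hw : ∀ n k : ℕ, ∑ x : Fin n → Bool, (if hw x = k then (1 : ℝ) else 0) = n.choose k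
  | 0, 0 => by simp [hw]
  | 0, k + 1 => by simp [hw]
  | n + 1, 0 => by
    have := card_hw n 0
    rw [sum_insertNth 0]
    simp only [hw_insertNth]
    simpa using this
  | n + 1, k + 1 => by
    rw [sum_insertNth 0]
    simp only [hw_insertNth, Finset.sum_add_distrib]
    rw [Nat.choose_succ_succ, Nat.cast_add, ← card_hw n k, ← card_hw n (k + 1)]
    simp [add_comm 1]

/-- A coordinate is pivotal exactly when the remaining `2m` bits are balanced. -/
lemma mean_sgn_majSign (m : ℕ) (i : Fin (2 * m + 1)) :
    mean (fun x => sgn (x i) * majSign (2 * m + 1) x) = (2 * m).choose m / 4 ^ m := by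
  rw [mean, sum_insertNth i, ← card_hw (2 * m) m]
  have : ∀ x : Fin (2 * m) → Bool,
      sgn ((i.insertNth true x : Fin (2 * m + 1) → Bool) i) *
        majSign (2 * m + 1) (i.insertNth true x) +
      sgn ((i.insertNth false x : Fin (2 * m + 1) → Bool) i) *
        majSign (2 * m + 1) (i.insertNth false x) = 2 * (if hw x = m then 1 else 0) := by
    intro x
    simp only [Fin.insertNth_apply_same, majSign, majF, sgn, hw_insertNth, decide_eq_true_eq]
    simp only [if_true, Bool.false_eq_true, if_false]
    split_ifs <;> first | omega | norm_num
  simp only [this, ← Finset.mul_sum]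
  rw [pow_succ, pow_mul]
  norm_num
  field_simp

/-- The level-one weight of majority is the reciprocal of the Wallis product, so it tends to
`2/π`. -/
lemma levelOne_majSign (m : ℕ) : levelOne (majSign (2 * m + 1)) = (Real.Wallis.W m)⁻¹ := by
  have hc : ((2 * m).choose m : ℝ) * ((m.factorial : ℝ) * m.factorial) = (2 * m).factorial := by
    have := Nat.choose_mul_factorial_mul_factorial (show m ≤ 2 * m by omega)
    rw [show 2 * m - m = m by omega, mul_assoc] at this
    exact_mod_cast this
  have h0 : (m.factorial : ℝ) ≠ 0 := by positivity
  have h1 : ((2 * m).choose m : ℝ) ≠ 0 := by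
    have := Nat.choose_pos (show m ≤ 2 * m by omega)
    positivity
  simp only [levelOne, mean_sgn_majSign, Finset.sum_const, Finset.card_univ, Fintype.card_fin]
  rw [Real.Wallis.W_eq_factorial_ratio, ← hc, show (4 : ℝ) = 2 ^ 2 by norm_num, ← pow_mul, div_pow,
    ← pow_mul]
  simp only [nsmul_eq_mul]
  push_cast
  field_simp
  ring_nf

/-! ### Entropy bounds -/

/-- The difference of the two sides has derivative `t³ / (1 + t)`, so it is minimal at `t = 0`. -/
lemma log_one_add_le {t : ℝ} (ht : -1 < t) : Real.log (1 + t) ≤ t - t ^ 2 / 2 + t ^ 3 / 3 := by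
  set φ : ℝ → ℝ := fun t => t - t ^ 2 / 2 + t ^ 3 / 3 - Real.log (1 + t) with hφ
  have hd : ∀ s : ℝ, -1 < s → HasDerivAt φ (s ^ 3 / (1 + s)) s := by
    intro s hs
    have hs' : 1 + s ≠ 0 := by linarith
    have := (((hasDerivAt_id s).sub ((hasDerivAt_pow 2 s).div_const 2)).add
      ((hasDerivAt_pow 3 s).div_const 3)).sub (((hasDerivAt_id s).const_add 1).log hs')
    refine this.congr_deriv ?_
    simp only [id]
    field_simp
    ring
  have h0 : φ 0 = 0 := by simp [hφ]
  suffices 0 ≤ φ t by simp only [hφ] at this; linarith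
  rw [← h0]
  rcases le_total 0 t with h | h
  · refine monotoneOn_of_deriv_nonneg (convex_Ici 0)
      (fun s hs => (hd s ?_).continuousAt.continuousWithinAt)
      (fun s hs => (hd s ?_).differentiableAt.differentiableWithinAt) (fun s hs => ?_)
      (Set.mem_Ici.2 le_rfl) h h
    · have := Set.mem_Ici.1 hs; linarith
    · rw [interior_Ici] at hs; have := Set.mem_Ioi.1 hs; linarith
    · rw [interior_Ici] at hs; have := Set.mem_Ioi.1 hs
      rw [(hd s (by linarith)).deriv]; positivity
  · refine antitoneOn_of_deriv_nonpos (convex_Ioc (-1) 0)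
      (fun s hs => (hd s hs.1).continuousAt.continuousWithinAt)
      (fun s hs => (hd s (interior_subset hs).1).differentiableAt.differentiableWithinAt)
      (fun s hs => ?_) ⟨ht, h⟩ ⟨by norm_num, le_rfl⟩ h
    have hs := interior_subset hs
    rw [(hd s hs.1).deriv]
    have : s ^ 3 ≤ 0 := Odd.pow_nonpos (by decide) hs.2
    exact div_nonpos_of_nonpos_of_nonneg this (by linarith [hs.1])

/-- The endpoint `t = -1` holds because both sides vanish, with `log 0 = 0`. -/
lemma mul_log_le {t : ℝ} (ht : -1 ≤ t) :
    (1 + t) / 2 * Real.log ((1 + t) / 2) ≤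
      (1 + t) / 2 * (t - t ^ 2 / 2 + t ^ 3 / 3 - Real.log 2) := by
  rcases ht.eq_or_lt with rfl | ht
  · simp
  · rw [Real.log_div (by linarith) (by norm_num)]
    have := log_one_add_le ht
    have h : 0 ≤ (1 + t) / 2 := by linarith
    gcongr

/-- Quartic lower bound on binary entropy: `h((1+g)/2) ≥ 1 - g²/(2 ln 2) - g⁴/(3 ln 2)`. The odd
terms of the two cubic logarithm bounds cancel. The weight `P` is the probability of the
conditioning event. -/
lemma entropy_term_ge {P g : ℝ} (hP : 0 < P) (h1 : -1 ≤ g) (h2 : g ≤ 1) :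
    P * (1 - g ^ 2 / (2 * Real.log 2) - g ^ 4 / (3 * Real.log 2)) ≤
      -(P * ((1 + g) / 2) * Real.logb 2 (P * ((1 + g) / 2) / P)) +
      -(P * ((1 - g) / 2) * Real.logb 2 (P * ((1 - g) / 2) / P)) := by
  have hL : 0 < Real.log 2 := Real.log_pos (by norm_num)
  rw [mul_div_cancel_left₀ _ hP.ne', mul_div_cancel_left₀ _ hP.ne', Real.logb, Real.logb]
  have e1 := mul_log_le h1
  have e2 := mul_log_le (t := -g) (by linarith)
  rw [← sub_eq_add_neg] at e2
  have key : Real.log 2 - g ^ 2 / 2 - g ^ 4 / 3 ≤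
      -((1 + g) / 2 * Real.log ((1 + g) / 2)) - ((1 - g) / 2 * Real.log ((1 - g) / 2)) := by
    linarith
  have := mul_le_mul_of_nonneg_left key (show 0 ≤ P / Real.log 2 by positivity)
  refine le_trans (le_of_eq ?_) (this.trans (le_of_eq ?_))
  · field_simp
  · field_simp
    ring

lemma sum_kernel (α : ℝ) {n : ℕ} (y : Fin n → Bool) :
    ∑ x : Fin n → Bool, ∏ i, (if y i = x i then 1 - α else α) = 1 := by
  have := Finset.prod_univ_sum (fun _ : Fin n => (Finset.univ : Finset Bool))
    (fun i b => if y i = b then 1 - α else α)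
  rw [Fintype.piFinset_univ] at this
  rw [← this]
  refine Finset.prod_eq_one fun i _ => ?_
  cases y i <;> simp

lemma noisyPMF_add (α : ℝ) {n : ℕ} (y : Fin n → Bool) :
    noisyPMF n α (majF n) true y + noisyPMF n α (majF n) false y = ((2 : ℝ) ^ n)⁻¹ := by
  rw [← mul_one ((2 : ℝ) ^ n)⁻¹, ← sum_kernel α y, Finset.mul_sum]
  unfold noisyPMF
  rw [← Finset.sum_add_distrib]
  refine Finset.sum_congr rfl fun x _ => ?_
  cases majF n x <;> simp

lemma noisyPMF_sub (α : ℝ) {n : ℕ} (y : Fin n → Bool) :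
    noisyPMF n α (majF n) true y - noisyPMF n α (majF n) false y =
      ((2 : ℝ) ^ n)⁻¹ * noiseOp α (majSign n) y := by
  unfold noisyPMF noiseOp
  rw [← Finset.sum_sub_distrib, Finset.mul_sum]
  refine Finset.sum_congr rfl fun x _ => ?_
  unfold majSign
  cases majF n x <;> simp [sgn]

lemma noisyPMF_nonneg {α : ℝ} (h0 : 0 ≤ α) (h1 : α ≤ 1) {n : ℕ} (c : Bool) (y : Fin n → Bool) :
    0 ≤ noisyPMF n α (majF n) c y := by
  refine Finset.sum_nonneg fun x _ => ?_
  split_ifs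
  · refine mul_nonneg (by positivity) (Finset.prod_nonneg fun i _ => ?_)
    split_ifs <;> linarith
  · exact le_rfl

/-- Averaging the quartic bound over `y`, with `g = E[±maj(X) | Y = y]`. -/
lemma condEnt_ge {α : ℝ} (h0 : 0 ≤ α) (h1 : α ≤ 1) (n : ℕ) :
    1 - mean (fun y => noiseOp α (majSign n) y ^ 2) / (2 * Real.log 2)
      - mean (fun y => noiseOp α (majSign n) y ^ 4) / (3 * Real.log 2) ≤
    condEntBool (fun (y : Fin n → Bool) (c : Bool) => noisyPMF n α (majF n) c y) := by
  have hL : Real.log 2 ≠ 0 := (Real.log_pos (by norm_num)).ne'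
  have hP : (0 : ℝ) < ((2 : ℝ) ^ n)⁻¹ := by positivity
  have hlhs : 1 - mean (fun y => noiseOp α (majSign n) y ^ 2) / (2 * Real.log 2)
      - mean (fun y => noiseOp α (majSign n) y ^ 4) / (3 * Real.log 2) =
      ∑ y, ((2 : ℝ) ^ n)⁻¹ * (1 - noiseOp α (majSign n) y ^ 2 / (2 * Real.log 2)
        - noiseOp α (majSign n) y ^ 4 / (3 * Real.log 2)) := by
    simp only [mean]
    rw [← Finset.mul_sum, Finset.sum_sub_distrib, Finset.sum_sub_distrib, ← Finset.sum_div,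
      ← Finset.sum_div]
    simp
    field_simp
  rw [hlhs, condEntBool]
  refine Finset.sum_le_sum fun y _ => ?_
  simp only [Fintype.sum_bool]
  have ha := noisyPMF_add α y
  have hs := noisyPMF_sub α y
  have ht := noisyPMF_nonneg h0 h1 true y
  have hf := noisyPMF_nonneg h0 h1 false y
  rw [ha]
  set P := ((2 : ℝ) ^ n)⁻¹
  set g := noiseOp α (majSign n) y
  have et : noisyPMF n α (majF n) true y = P * ((1 + g) / 2) := by linarith
  have ef : noisyPMF n α (majF n) false y = P * ((1 - g) / 2) := by linarith
  rw [et] at ht ⊢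
  rw [ef] at hf ⊢
  have := nonneg_of_mul_nonneg_right ht hP
  have := nonneg_of_mul_nonneg_right hf hP
  exact entropy_term_ge hP (by linarith) (by linarith)

end
end MajEnt

theorem stmt19 : ∃ c : ℝ, 0 < c ∧ ∃ α₀ : ℝ, 0 < α₀ ∧ α₀ < 1/2 ∧
    ∀ α : ℝ, α₀ < α → α < 1/2 →
    ∀ ε : ℝ, 0 < ε → ∃ N : ℕ, ∀ n : ℕ, N ≤ n → Odd n →
      condEntBool (fun (y : Fin n → Bool) (c : Bool) => noisyPMF n α (majF n) c y)
        ≥ 1 - (1 / (Real.pi * Real.log 2)) * ((1 - 2*α)^2 / (4*α*(1-α))) - c * (1 - 2*α)^4 - ε := by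
  have hL : 0 < Real.log 2 := Real.log_pos (by norm_num)
  have hpi := Real.pi_pos
  -- `α > 1/4` makes `3 (1 - 2α)² ≤ 1`, as the stability bounds require; the constant collects
  -- the `ρ⁴` terms of the second moment (`1`) and of the fourth moment (`9`).
  refine ⟨1 / (2 * Real.log 2) + 3 / Real.log 2, by positivity, 1 / 4, by norm_num, by norm_num,
    fun α hα hα' ε hε => ?_⟩
  have hW : Filter.Tendsto (fun m => (Real.Wallis.W m)⁻¹) Filter.atTop
      (nhds (Real.pi / 2)⁻¹) :=
    Real.Wallis.tendsto_W_nhds_pi_div_two.inv₀ (by positivity)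
  have hlt : (Real.pi / 2)⁻¹ < (Real.pi / 2)⁻¹ + 2 * Real.log 2 * ε := by
    have : 0 < 2 * Real.log 2 * ε := by positivity
    linarith
  obtain ⟨M, hM⟩ := Filter.eventually_atTop.1 (hW.eventually (gt_mem_nhds hlt))
  -- `n = 2m + 1 ≥ 2M + 1` gives `m ≥ M`.
  refine ⟨2 * M + 1, fun n hn hodd => ?_⟩
  have hent := MajEnt.condEnt_ge (α := α) (by linarith) (by linarith) n
  have hfour := MajEnt.mean_noise_four α n (MajEnt.majSign n)
  rw [MajEnt.mean_noise_sq] at hent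
  set r : ℝ := (1 - 2 * α) ^ 2 with hr
  have hr0 : 0 < r := by have : 0 < 1 - 2 * α := by linarith
                         positivity
  have hr1 : r < 1 / 4 := by rw [hr]; nlinarith
  have h3 := MajEnt.stab_le_three hr0.le (by linarith) n (MajEnt.majSign n)
  have h2 := MajEnt.stab_le_two (t := 3 * r) (by linarith) (by linarith) n (MajEnt.majSign n)
  rw [MajEnt.mean_majSign hodd, MajEnt.mean_majSign_sq] at h2 h3
  have hs := MajEnt.stab_nonneg (t := 3 * r) (by linarith) n (MajEnt.majSign n)
  have hw : MajEnt.levelOne (MajEnt.majSign n) ≤ (Real.pi / 2)⁻¹ + 2 * Real.log 2 * ε := by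
    obtain ⟨m, rfl⟩ := hodd
    rw [MajEnt.levelOne_majSign]
    exact (hM m (by omega)).le
  have h2' : MajEnt.stab (3 * r) n (MajEnt.majSign n) ^ 2 ≤ 9 * r ^ 2 := by nlinarith
  have h4 : MajEnt.mean (fun y => MajEnt.noiseOp α (MajEnt.majSign n) y ^ 4) / (3 * Real.log 2) ≤
      3 * r ^ 2 / Real.log 2 := by
    rw [div_le_div_iff₀ (by positivity) hL]
    nlinarith
  have h5 : MajEnt.stab r n (MajEnt.majSign n) / (2 * Real.log 2) ≤
      1 / (Real.pi * Real.log 2) * r + ε + r ^ 2 / (2 * Real.log 2) := by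
    have e : MajEnt.stab r n (MajEnt.majSign n) ≤
        r * (Real.pi / 2)⁻¹ + 2 * Real.log 2 * ε + r ^ 2 := by
      have := mul_le_mul_of_nonneg_left hw hr0.le
      have : r * (2 * Real.log 2 * ε) ≤ 1 * (2 * Real.log 2 * ε) := by gcongr; linarith
      linarith
    calc _ ≤ (r * (Real.pi / 2)⁻¹ + 2 * Real.log 2 * ε + r ^ 2) / (2 * Real.log 2) := by gcongr
      _ = _ := by field_simp
  -- `4α(1 - α) = 1 - r ≤ 1`, so replacing `r` by `r / (4α(1 - α))` only weakens the bound.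
  have h6 : r ≤ r / (4 * α * (1 - α)) := by
    have e : 4 * α * (1 - α) = 1 - r := by rw [hr]; ring
    rw [e, le_div_iff₀ (by linarith)]
    nlinarith
  have h7 : 1 / (Real.pi * Real.log 2) * r ≤
      1 / (Real.pi * Real.log 2) * (r / (4 * α * (1 - α))) := by gcongr
  have h8 : (1 / (2 * Real.log 2) + 3 / Real.log 2) * (1 - 2 * α) ^ 4 =
      r ^ 2 / (2 * Real.log 2) + 3 * r ^ 2 / Real.log 2 := by rw [hr]; ring
  rw [h8]
  linarith
end
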